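/- There exists a constant $c > 0$ such that for all sufficiently large $x$ and every integer $k$ with $|k - \log\log x| \le C \sqrt{\log\log x}$ (for any fixed $C > 0$), the number of $n \le x$ such that $n(n+1)$ is squarefree and $\omega(n) = k$ is at least $c_C \, x / \sqrt{\log\log x}$, where $c_C > 0$ depends only on $C$. -/

import Mathlib

open Finset


/-! ### Part 1 : elementary symmetric sums -/

lemma aux_sum_powerset_mem (P : Finset ℕ) (F : ℕ → Finset ℕ → ℝ) :
    ∑ T ∈ P.powerset, ∑ p ∈ T, F p T
      = ∑ p ∈ P, ∑ T ∈ (P.erase p).powerset, F p (insert p T) := by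
  rw [Finset.sum_comm' (s' := fun p => P.powerset.filter (fun T => p ∈ T)) (t' := P)]
  · refine Finset.sum_congr rfl fun p hp => ?_
    refine Finset.sum_bij' (fun T _ => T.erase p) (fun T _ => insert p T) ?_ ?_ ?_ ?_ ?_
    · intro T hT
      simp only [mem_filter, mem_powerset] at hT ⊢
      exact Finset.erase_subset_erase _ hT.1
    · intro T hT
      simp only [mem_filter, mem_powerset] at hT ⊢
      refine ⟨?_, by simp⟩
      intro y hy
      rcases Finset.mem_insert.1 hy with rfl | h
      · exact hp
      · exact Finset.mem_of_mem_erase (hT h)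
    · intro T hT
      simp only [mem_filter, mem_powerset] at hT
      exact Finset.insert_erase hT.2
    · intro T hT
      simp only [mem_powerset] at hT
      exact Finset.erase_insert fun h => by simpa using hT h
    · intro T hT
      simp only [mem_filter, mem_powerset] at hT
      rw [Finset.insert_erase hT.2]
  · intro T p
    simp only [mem_filter, mem_powerset]
    constructor
    · rintro ⟨h1, h2⟩; exact ⟨⟨h1, h2⟩, h1 h2⟩
    · rintro ⟨⟨h1, h2⟩, _⟩; exact ⟨h1, h2⟩

/-- elementary symmetric sum -/
noncomputable def eSum (P : Finset ℕ) (a : ℕ → ℝ) (j : ℕ) : ℝ :=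
  ∑ T ∈ P.powersetCard j, ∏ p ∈ T, a p

lemma eSum_nonneg (P : Finset ℕ) (a : ℕ → ℝ) (ha : ∀ p, 0 ≤ a p) (j : ℕ) : 0 ≤ eSum P a j :=
  Finset.sum_nonneg fun _ _ => Finset.prod_nonneg fun p _ => ha p

lemma eSum_zero (P : Finset ℕ) (a : ℕ → ℝ) : eSum P a 0 = 1 := by
  simp [eSum]

lemma eSum_mono {P P' : Finset ℕ} (h : P ⊆ P') (a : ℕ → ℝ) (ha : ∀ p, 0 ≤ a p) (j : ℕ) :
    eSum P a j ≤ eSum P' a j :=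
  Finset.sum_le_sum_of_subset_of_nonneg (Finset.powersetCard_mono h)
    fun _ _ _ => Finset.prod_nonneg fun p _ => ha p

lemma eSum_weighted (P : Finset ℕ) (a g : ℕ → ℝ) (j : ℕ) :
    ∑ T ∈ P.powersetCard (j + 1), (∑ p ∈ T, g p) * ∏ p ∈ T, a p
      = ∑ p ∈ P, g p * a p * eSum (P.erase p) a j := by
  have h := aux_sum_powerset_mem P
    (fun p T => if T.card = j + 1 then g p * ∏ p ∈ T, a p else 0)
  have h1 : ∑ T ∈ P.powersetCard (j + 1), (∑ p ∈ T, g p) * ∏ p ∈ T, a p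
      = ∑ T ∈ P.powerset, ∑ p ∈ T, (if T.card = j + 1 then g p * ∏ p ∈ T, a p else 0) := by
    rw [Finset.powersetCard_eq_filter, Finset.sum_filter]
    refine Finset.sum_congr rfl fun T _ => ?_
    split_ifs
    · rw [Finset.sum_mul]
    · simp
  rw [h1, h]
  refine Finset.sum_congr rfl fun p hp => ?_
  rw [eSum, Finset.powersetCard_eq_filter, Finset.sum_filter, Finset.mul_sum]
  refine Finset.sum_congr rfl fun T hT => ?_
  have hpT : p ∉ T := fun h => by simpa using (Finset.mem_powerset.1 hT) h
  rw [Finset.card_insert_of_notMem hpT, Finset.prod_insert hpT]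
  by_cases hc : T.card = j
  · simp [hc]; ring
  · simp [hc]

lemma eSum_succ (P : Finset ℕ) (a : ℕ → ℝ) (j : ℕ) :
    ((j : ℝ) + 1) * eSum P a (j + 1) = ∑ p ∈ P, a p * eSum (P.erase p) a j := by
  have h := eSum_weighted P a (fun _ => 1) j
  simp only [one_mul] at h
  rw [← h, eSum, Finset.mul_sum]
  refine Finset.sum_congr rfl fun T hT => ?_
  rw [Finset.mem_powersetCard] at hT
  simp [hT.2]

lemma eSum_erase (P : Finset ℕ) (a : ℕ → ℝ) (j : ℕ) (p : ℕ) (hp : p ∈ P) :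
    eSum P a (j + 1) = eSum (P.erase p) a (j + 1) + a p * eSum (P.erase p) a j := by
  conv_lhs => rw [← Finset.insert_erase hp]
  rw [eSum, Finset.powersetCard_succ_insert (Finset.notMem_erase p P), Finset.sum_union]
  · congr 1
    rw [Finset.sum_image]
    · rw [eSum, Finset.mul_sum]
      refine Finset.sum_congr rfl fun T hT => ?_
      rw [Finset.mem_powersetCard] at hT
      rw [Finset.prod_insert fun h => by simpa using hT.1 h]
    · intro T hT T' hT' h
      simp only [Finset.mem_coe, Finset.mem_powersetCard] at hT hT'
      have h1 : p ∉ T := fun h => by simpa using hT.1 h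
      have h2 : p ∉ T' := fun h => by simpa using hT'.1 h
      rw [← Finset.erase_insert h1, ← Finset.erase_insert h2]
      rw [h]
  · rw [Finset.disjoint_left]
    intro T hT hT'
    rw [Finset.mem_powersetCard] at hT
    rw [Finset.mem_image] at hT'
    obtain ⟨U, _, rfl⟩ := hT'
    simpa using hT.1 (Finset.mem_insert_self p U)

lemma eSum_upper (P : Finset ℕ) (a : ℕ → ℝ) (ha : ∀ p, 0 ≤ a p) (j : ℕ) :
    (j.factorial : ℝ) * eSum P a j ≤ (∑ p ∈ P, a p) ^ j := by
  have hS : 0 ≤ ∑ p ∈ P, a p := Finset.sum_nonneg fun p _ => ha p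
  induction j with
  | zero => simp [eSum_zero]
  | succ j ih =>
    have h1 : ((j : ℝ) + 1) * eSum P a (j + 1) ≤ (∑ p ∈ P, a p) * eSum P a j := by
      rw [eSum_succ, Finset.sum_mul]
      exact Finset.sum_le_sum fun p _ =>
        mul_le_mul_of_nonneg_left (eSum_mono (Finset.erase_subset _ _) a ha j) (ha p)
    rw [Nat.factorial_succ]
    push_cast
    calc ((j : ℝ) + 1) * j.factorial * eSum P a (j + 1)
        = j.factorial * (((j : ℝ) + 1) * eSum P a (j + 1)) := by ring
      _ ≤ j.factorial * ((∑ p ∈ P, a p) * eSum P a j) := by gcongr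
      _ = (∑ p ∈ P, a p) * (j.factorial * eSum P a j) := by ring
      _ ≤ (∑ p ∈ P, a p) * (∑ p ∈ P, a p) ^ j := by gcongr
      _ = _ := by ring

lemma eSum_lower (P : Finset ℕ) (a : ℕ → ℝ) (ha : ∀ p, 0 ≤ a p) (j : ℕ) :
    (∑ p ∈ P, a p) ^ (j + 2) - ((j : ℝ) + 2) * (j + 1) / 2 * (∑ p ∈ P, a p ^ 2) *
        (∑ p ∈ P, a p) ^ j ≤ ((j + 2).factorial : ℝ) * eSum P a (j + 2) := by
  have hS : 0 ≤ ∑ p ∈ P, a p := Finset.sum_nonneg fun p _ => ha p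
  have hS2 : 0 ≤ ∑ p ∈ P, a p ^ 2 := Finset.sum_nonneg fun p _ => sq_nonneg _
  have hrec : ∀ i : ℕ, (∑ p ∈ P, a p) * eSum P a (i + 1) - (∑ p ∈ P, a p ^ 2) * eSum P a i
      ≤ ((i : ℝ) + 2) * eSum P a (i + 2) := by
    intro i
    have := eSum_succ P a (i + 1)
    push_cast at this
    rw [show (i : ℝ) + 2 = i + 1 + 1 by ring, this, Finset.sum_mul, Finset.sum_mul,
      ← Finset.sum_sub_distrib]
    refine Finset.sum_le_sum fun p hp => ?_
    rw [eSum_erase P a i p hp]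
    have h2 := eSum_mono (Finset.erase_subset p P) a ha i
    have h3 := mul_le_mul_of_nonneg_left h2 (sq_nonneg (a p))
    nlinarith
  have h1 : eSum P a 1 = ∑ p ∈ P, a p := by
    have := eSum_succ P a 0
    simpa [eSum_zero] using this
  induction j with
  | zero =>
    have := hrec 0
    simp only [zero_add, eSum_zero, h1] at this
    norm_num at this ⊢
    nlinarith
  | succ j ih =>
    have h := hrec (j + 1)
    have hu := eSum_upper P a ha (j + 1)
    set S := ∑ p ∈ P, a p
    set S2 := ∑ p ∈ P, a p ^ 2
    have hf : (((j + 1 + 2).factorial : ℕ) : ℝ) = ((j : ℝ) + 3) * ((j + 2).factorial : ℝ) := by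
      rw [show j + 1 + 2 = (j + 2) + 1 by ring, Nat.factorial_succ]; push_cast; ring
    have hf2 : (((j + 2).factorial : ℕ) : ℝ) = ((j : ℝ) + 2) * ((j + 1).factorial : ℝ) := by
      rw [show j + 2 = (j + 1) + 1 by ring, Nat.factorial_succ]; push_cast; ring
    rw [hf]
    push_cast at h ⊢
    have hF : (0 : ℝ) ≤ ((j + 2).factorial : ℝ) := by positivity
    have e1 := mul_le_mul_of_nonneg_left h hF
    have e2 := mul_le_mul_of_nonneg_left ih hS
    have e3 : ((j + 2).factorial : ℝ) * (S2 * eSum P a (j + 1)) ≤ ((j : ℝ) + 2) * S2 * S ^ (j + 1) := by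
      rw [hf2]
      have := mul_le_mul_of_nonneg_left hu (show 0 ≤ ((j : ℝ) + 2) * S2 by positivity)
      linarith
    have e4 : ((j : ℝ) + 3) * ((j + 2).factorial : ℝ) * eSum P a (j + 1 + 2)
      = ((j + 2).factorial : ℝ) * (((j : ℝ) + 1 + 2) * eSum P a (j + 1 + 2)) := by ring
    rw [e4]
    refine le_trans ?_ e1
    have e5 : S ^ (j + 1 + 2) = S * S ^ (j + 2) := by ring
    have e6 : S ^ (j + 1) = S * S ^ j := by ring
    rw [e6] at e3 ⊢
    rw [e5]
    have e7 : eSum P a (j + 1 + 1) = eSum P a (j + 2) := rfl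
    rw [e7]
    nlinarith


/-! ### Part 2 : Mertens type bounds -/

lemma sum_log_div_le (N : ℕ) (hN : 1 ≤ N) :
    ∑ p ∈ N.primesLE, Real.log p / p ≤ Real.log N + Real.log 4 := by
  have hNpos : (0 : ℝ) < N := by exact_mod_cast hN
  have h1 : ∑ p ∈ N.primesLE, ((N / p : ℕ) : ℝ) * Real.log p ≤ Real.log (N.factorial) := by
    have hd : ∏ p ∈ N.primesLE, p ^ (N / p) ∣ N.factorial := by
      refine Finset.prod_dvd_of_isRelPrime ?_ ?_
      · intro p hp q hq hpq
        simp only [Finset.mem_coe, Nat.mem_primesLE] at hp hq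
        exact (Nat.coprime_iff_isRelPrime.1
          (Nat.Coprime.pow _ _ ((Nat.coprime_primes hp.2 hq.2).2 hpq)))
      · intro p hp
        rw [Nat.mem_primesLE] at hp
        rw [hp.2.pow_dvd_iff_le_factorization (Nat.factorial_ne_zero N),
          Nat.factorization_factorial hp.2 (Nat.lt_succ_self _)]
        have : N / p = N / p ^ 1 := by simp
        rw [this]
        refine Finset.single_le_sum (f := fun i => N / p ^ i) (fun _ _ => Nat.zero_le _) ?_
        simp only [mem_Ico, le_refl, true_and, Nat.succ_eq_add_one]
        have := Nat.log_pos hp.2.one_lt hp.1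
        omega
    have hle := Nat.le_of_dvd (Nat.factorial_pos N) hd
    have hle' : ((∏ p ∈ N.primesLE, p ^ (N / p) : ℕ) : ℝ) ≤ (N.factorial : ℝ) := by
      exact_mod_cast hle
    have hpos : (0 : ℝ) < ((∏ p ∈ N.primesLE, p ^ (N / p) : ℕ) : ℝ) := by
      norm_cast
      exact Finset.prod_pos fun p hp => pow_pos (Nat.mem_primesLE.1 hp).2.pos _
    have := Real.log_le_log hpos hle'
    refine le_trans (le_of_eq ?_) this
    push_cast
    rw [Real.log_prod]
    · refine Finset.sum_congr rfl fun p hp => ?_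
      rw [Real.log_pow]
    · intro p hp
      have := (Nat.mem_primesLE.1 hp).2.pos
      positivity
  have h2 : Real.log (N.factorial) ≤ N * Real.log N := by
    have : (N.factorial : ℝ) ≤ (N : ℝ) ^ N := by exact_mod_cast Nat.factorial_le_pow N
    calc Real.log (N.factorial) ≤ Real.log ((N : ℝ) ^ N) :=
          Real.log_le_log (by exact_mod_cast Nat.factorial_pos N) this
      _ = _ := by rw [Real.log_pow]
  have h3 : ∑ p ∈ N.primesLE, ((N : ℝ) / p - 1) * Real.log p
      ≤ ∑ p ∈ N.primesLE, ((N / p : ℕ) : ℝ) * Real.log p := by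
    refine Finset.sum_le_sum fun p hp => ?_
    have hp1 : (1 : ℝ) ≤ p := by exact_mod_cast (Nat.mem_primesLE.1 hp).2.one_lt.le
    refine mul_le_mul_of_nonneg_right ?_ (Real.log_nonneg hp1)
    have := Nat.lt_floor_add_one ((N : ℝ) / p)
    rw [Nat.floor_div_natCast, Nat.floor_natCast] at this
    linarith
  have h4 := Chebyshev.theta_le_log4_mul_x hNpos.le
  rw [Chebyshev.theta_eq_sum_primesLE_log] at h4
  have h5 : ∑ p ∈ N.primesLE, ((N : ℝ) / p - 1) * Real.log p
      = N * (∑ p ∈ N.primesLE, Real.log p / p) - ∑ p ∈ N.primesLE, Real.log p := by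
    rw [Finset.mul_sum, ← Finset.sum_sub_distrib]
    exact Finset.sum_congr rfl fun p _ => by ring
  have h6 : N * (∑ p ∈ N.primesLE, Real.log p / p) ≤ N * (Real.log N + Real.log 4) := by
    nlinarith
  exact le_of_mul_le_mul_left h6 hNpos

lemma primeset_prod_injOn (P : Finset ℕ) (hP : ∀ p ∈ P, p.Prime) :
    Set.InjOn (fun T : Finset ℕ => ∏ p ∈ T, p) (P.powerset : Set (Finset ℕ)) := by
  intro T hT U hU h
  simp only [Finset.mem_coe, Finset.mem_powerset] at hT hU
  have h1 := Nat.primeFactors_prod (s := T) fun p hp => hP p (hT hp)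
  have h2 := Nat.primeFactors_prod (s := U) fun p hp => hP p (hU hp)
  simp only at h
  rw [← h1, h, h2]

lemma sum_inv_le_log (M : ℕ) : ∑ n ∈ Finset.Icc 1 M, (1 : ℝ) / n ≤ 1 + Real.log M := by
  have := harmonic_le_one_add_log M
  rw [harmonic_eq_sum_Icc] at this
  push_cast at this
  simpa [one_div] using this

lemma log_le_sum_inv (M : ℕ) (hM : 1 ≤ M) : Real.log M ≤ ∑ n ∈ Finset.Icc 1 M, (1 : ℝ) / n := by
  have := log_add_one_le_harmonic M
  rw [harmonic_eq_sum_Icc] at this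
  push_cast at this
  have h2 : Real.log M ≤ Real.log (M + 1) :=
    Real.log_le_log (by exact_mod_cast hM) (by linarith)
  simp only [one_div]
  linarith

lemma sum_inv_sq_le (P : Finset ℕ) (k : ℕ) (hP : ∀ p ∈ P, k < p) :
    ∑ p ∈ P, ((1 : ℝ) / p) ^ 2 ≤ 2 / (k + 1) := by
  refine le_trans ?_ (sum_Ioo_inv_sq_le (α := ℝ) k (P.sup id + 1))
  simp only [one_div, inv_pow]
  refine Finset.sum_le_sum_of_subset_of_nonneg ?_ fun _ _ _ => by positivity
  intro p hp
  rw [Finset.mem_Ioo]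
  exact ⟨hP p hp, Nat.lt_succ_of_le (Finset.le_sup (f := id) hp)⟩

/-- Mertens product, upper bound. -/
lemma prod_one_add_inv_le (N : ℕ) (hN : 1 ≤ N) :
    ∏ p ∈ N.primesLE, (1 + (1 : ℝ) / p) ≤ 2 * (1 + Real.log 16 + 2 * Real.log N) := by
  set P := N.primesLE with hPdef
  have hP : ∀ p ∈ P, p.Prime := fun p hp => (Nat.mem_primesLE.1 hp).2
  have hNpos : (0 : ℝ) < N := by exact_mod_cast hN
  have hlog : ∀ T ∈ P.powerset, ∑ p ∈ T, Real.log p = Real.log ((∏ p ∈ T, p : ℕ) : ℝ) := by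
    intro T hT
    push_cast
    rw [Real.log_prod]
    intro p hp
    have := (hP p (Finset.mem_powerset.1 hT hp)).pos
    positivity
  set B := Real.log N + Real.log 4 with hB
  have hBpos : 0 < B := by
    have : 0 ≤ Real.log N := Real.log_nonneg (by exact_mod_cast hN)
    have : 0 < Real.log 4 := Real.log_pos (by norm_num)
    positivity
  rw [Finset.prod_one_add]
  set W := ∑ T ∈ P.powerset, ∏ p ∈ T, (1 : ℝ) / p with hW
  have hterm : ∀ T : Finset ℕ, 0 ≤ ∏ p ∈ T, (1 : ℝ) / p := fun T =>
    Finset.prod_nonneg fun p _ => by positivity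
  have hmom : ∑ T ∈ P.powerset, (∑ p ∈ T, Real.log p) * ∏ p ∈ T, (1 : ℝ) / p ≤ B * W := by
    have h := aux_sum_powerset_mem P (fun p T => Real.log p * ∏ p ∈ T, (1 : ℝ) / p)
    simp only [← Finset.sum_mul] at h
    rw [h]
    calc ∑ p ∈ P, ∑ T ∈ (P.erase p).powerset, Real.log p * ∏ q ∈ insert p T, (1 : ℝ) / q
        ≤ ∑ p ∈ P, Real.log p / p * W := by
          refine Finset.sum_le_sum fun p hp => ?_
          have hlp : 0 ≤ Real.log p := Real.log_nonneg (by exact_mod_cast (hP p hp).one_lt.le)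
          calc ∑ T ∈ (P.erase p).powerset, Real.log p * ∏ q ∈ insert p T, (1 : ℝ) / q
              = ∑ T ∈ (P.erase p).powerset, Real.log p / p * ∏ q ∈ T, (1 : ℝ) / q := by
                refine Finset.sum_congr rfl fun T hT => ?_
                rw [Finset.prod_insert fun h => by simpa using (Finset.mem_powerset.1 hT) h]
                ring
            _ ≤ Real.log p / p * W := by
                rw [← Finset.mul_sum]
                refine mul_le_mul_of_nonneg_left ?_ (by positivity)
                exact Finset.sum_le_sum_of_subset_of_nonneg
                  (Finset.powerset_mono.2 (Finset.erase_subset _ _)) fun T _ _ => hterm T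
      _ = (∑ p ∈ P, Real.log p / p) * W := by rw [Finset.sum_mul]
      _ ≤ B * W := mul_le_mul_of_nonneg_right (sum_log_div_le N hN)
          (Finset.sum_nonneg fun T _ => hterm T)
  -- split
  have hsplit := Finset.sum_filter_add_sum_filter_not P.powerset
    (fun T => ∑ p ∈ T, Real.log (p : ℕ) ≤ 2 * B) (fun T => ∏ p ∈ T, (1 : ℝ) / p)
  have hbig : 2 * B * ∑ T ∈ P.powerset with ¬ (∑ p ∈ T, Real.log (p : ℕ) ≤ 2 * B), ∏ p ∈ T, (1 : ℝ) / p
      ≤ B * W := by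
    refine le_trans ?_ hmom
    rw [Finset.mul_sum]
    refine le_trans (Finset.sum_le_sum (g := fun T : Finset ℕ => (∑ p ∈ T, Real.log p) * ∏ p ∈ T, (1 : ℝ) / p)
      fun T hT => ?_) (Finset.sum_le_sum_of_subset_of_nonneg (Finset.filter_subset _ _) ?_)
    · rw [Finset.mem_filter, not_le] at hT
      exact mul_le_mul_of_nonneg_right hT.2.le (hterm T)
    · intro T hT _
      refine mul_nonneg (Finset.sum_nonneg fun p hp => Real.log_nonneg ?_) (hterm T)
      exact_mod_cast (hP p (Finset.mem_powerset.1 hT hp)).one_lt.le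
  have hsmall : ∑ T ∈ P.powerset with (∑ p ∈ T, Real.log (p : ℕ) ≤ 2 * B), ∏ p ∈ T, (1 : ℝ) / p
      ≤ 1 + Real.log 16 + 2 * Real.log N := by
    have h16 : Real.log ((16 * N ^ 2 : ℕ) : ℝ) = Real.log 16 + 2 * Real.log N := by
      push_cast
      rw [Real.log_mul (by norm_num) (by positivity), Real.log_pow]; norm_num
    have h2B : 2 * B = Real.log ((16 * N ^ 2 : ℕ) : ℝ) := by
      rw [h16, hB, show (16 : ℝ) = 4 ^ 2 by norm_num, Real.log_pow]; push_cast; ring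
    have := sum_inv_le_log (16 * N ^ 2)
    rw [h16] at this
    rw [add_assoc]
    refine le_trans ?_ this
    have himg : ∑ T ∈ P.powerset with (∑ p ∈ T, Real.log (p : ℕ) ≤ 2 * B), ∏ p ∈ T, (1 : ℝ) / p
       = ∑ n ∈ (P.powerset.filter (fun T => ∑ p ∈ T, Real.log (p : ℕ) ≤ 2 * B)).image
          (fun T : Finset ℕ => ∏ p ∈ T, p), (1 : ℝ) / n := by
      rw [Finset.sum_image]
      · refine Finset.sum_congr rfl fun T _ => ?_
        push_cast
        simp
      · exact (primeset_prod_injOn P hP).mono (by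
          intro T hT
          rw [Finset.mem_coe, Finset.mem_filter] at hT
          exact hT.1)
    rw [himg]
    refine Finset.sum_le_sum_of_subset_of_nonneg ?_ fun _ _ _ => by positivity
    intro n hn
    rw [Finset.mem_image] at hn
    obtain ⟨T, hT, rfl⟩ := hn
    rw [Finset.mem_filter] at hT
    have hpos : 0 < ∏ p ∈ T, p := Finset.prod_pos fun p hp =>
      (hP p (Finset.mem_powerset.1 hT.1 hp)).pos
    rw [Finset.mem_Icc]
    refine ⟨hpos, ?_⟩
    have h := hT.2
    rw [hlog T hT.1, h2B, Real.log_le_log_iff (by exact_mod_cast hpos) (by positivity)] at h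
    exact_mod_cast h
  have : ∑ T ∈ P.powerset with ¬ (∑ p ∈ T, Real.log (p : ℕ) ≤ 2 * B), ∏ p ∈ T, (1 : ℝ) / p ≤ W / 2 := by
    have h := hbig
    rw [show B * W = 2 * B * (W / 2) by ring] at h
    exact le_of_mul_le_mul_left h (by positivity)
  rw [← hW] at hsplit
  linarith

lemma log_le_prod (N : ℕ) (hN : 1 ≤ N) :
    Real.log N ≤ 2 * ∏ p ∈ N.primesLE, (1 + (1 : ℝ) / p) := by
  set P := N.primesLE with hPdef
  have hP : ∀ p ∈ P, p.Prime := fun p hp => (Nat.mem_primesLE.1 hp).2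
  have hsq : ∑ b ∈ Finset.Icc 1 N, ((1 : ℝ) / b) ^ 2 ≤ 2 := by
    have := sum_inv_sq_le (Finset.Icc 1 N) 0 (fun p hp => (Finset.mem_Icc.1 hp).1)
    simpa using this
  refine (log_le_sum_inv N hN).trans ?_
  rw [Finset.prod_one_add]
  have hterm : ∀ T : Finset ℕ, 0 ≤ ∏ p ∈ T, (1 : ℝ) / p := fun T =>
    Finset.prod_nonneg fun p _ => by positivity
  refine le_trans ?_ (mul_le_mul_of_nonneg_right hsq (Finset.sum_nonneg fun T _ => hterm T))
  rw [Finset.sum_mul_sum, ← Finset.sum_product']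
  choose A B hAB hA using Nat.sq_mul_squarefree
  have hinj : Set.InjOn (fun n : ℕ => (B n, (A n).primeFactors)) (Finset.Icc 1 N : Set ℕ) := by
    intro n hn m hm h
    simp only [Prod.mk.injEq] at h
    rw [← hAB n, ← hAB m, h.1, ← Nat.prod_primeFactors_of_squarefree (hA n), h.2,
      Nat.prod_primeFactors_of_squarefree (hA m)]
  have : ∑ n ∈ Finset.Icc 1 N, (1 : ℝ) / n
      = ∑ z ∈ (Finset.Icc 1 N).image (fun n : ℕ => (B n, (A n).primeFactors)),
        ((1 : ℝ) / z.1) ^ 2 * ∏ p ∈ z.2, (1 : ℝ) / p := by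
    rw [Finset.sum_image hinj]
    refine Finset.sum_congr rfl fun n hn => ?_
    have h1 : ∏ p ∈ (A n).primeFactors, (1 : ℝ) / p = 1 / (A n) := by
      conv_rhs => rw [← Nat.prod_primeFactors_of_squarefree (hA n)]
      push_cast
      simp
    rw [h1]
    conv_lhs => rw [← hAB n]
    push_cast
    simp only [one_div, mul_inv, inv_pow]
  rw [this]
  refine Finset.sum_le_sum_of_subset_of_nonneg ?_ fun z _ _ => mul_nonneg (by positivity) (hterm _)
  intro z hz
  rw [Finset.mem_image] at hz
  obtain ⟨n, hn, rfl⟩ := hz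
  rw [Finset.mem_Icc] at hn
  have hab := hAB n
  have hApos : 0 < A n := Nat.pos_of_ne_zero (hA n).ne_zero
  have hBpos : 0 < B n := by
    rcases Nat.eq_zero_or_pos (B n) with h | h
    · rw [h] at hab; simp at hab; omega
    · exact h
  have hAle : A n ≤ n := by nlinarith [Nat.one_le_pow 2 (B n) hBpos]
  have hBle : B n ≤ n := by nlinarith
  rw [Finset.mem_product, Finset.mem_Icc, Finset.mem_powerset]
  refine ⟨⟨hBpos, hBle.trans hn.2⟩, ?_⟩
  intro p hp
  rw [hPdef, Nat.mem_primesLE]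
  exact ⟨((Nat.le_of_mem_primeFactors hp).trans hAle).trans hn.2, Nat.prime_of_mem_primeFactors hp⟩

/-- The second theorem of Mertens up to a bounded error. -/
lemma mertens : ∃ M : ℝ, 0 < M ∧ ∀ N : ℕ, 3 ≤ N →
    |∑ p ∈ N.primesLE, (1 : ℝ) / p - Real.log (Real.log N)| ≤ M := by
  refine ⟨2 + Real.log 2 + Real.log (2 * (1 + Real.log 16 + 2)), ?_, ?_⟩
  · have : 0 < Real.log 2 := Real.log_pos (by norm_num)
    have h16 : 0 < Real.log 16 := Real.log_pos (by norm_num)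
    have : 0 < Real.log (2 * (1 + Real.log 16 + 2)) := Real.log_pos (by linarith)
    positivity
  intro N hN
  have hl2 : 0 < Real.log 2 := Real.log_pos (by norm_num)
  have h16 : 0 < Real.log 16 := Real.log_pos (by norm_num)
  have hlM : 0 < Real.log (2 * (1 + Real.log 16 + 2)) := Real.log_pos (by linarith)
  have hN1 : 1 ≤ N := by omega
  have hlogN : 1 ≤ Real.log N := by
    rw [Real.le_log_iff_exp_le (by positivity)]
    have : (3 : ℝ) ≤ N := by exact_mod_cast hN
    linarith [Real.exp_one_lt_d9]
  have hup := prod_one_add_inv_le N hN1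
  have hlo := log_le_prod N hN1
  set P := N.primesLE with hPdef
  have hP : ∀ p ∈ P, p.Prime := fun p hp => (Nat.mem_primesLE.1 hp).2
  have hsq : ∑ p ∈ P, ((1 : ℝ) / p) ^ 2 ≤ 2 := by
    have := sum_inv_sq_le P 0 (fun p hp => (hP p hp).pos)
    simpa using this
  have hprodpos : 0 < ∏ p ∈ P, (1 + (1 : ℝ) / p) := Finset.prod_pos fun p _ => by positivity
  have hlogprod : Real.log (∏ p ∈ P, (1 + (1 : ℝ) / p)) = ∑ p ∈ P, Real.log (1 + (1 : ℝ) / p) :=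
    Real.log_prod fun p _ => by positivity
  rw [abs_le]
  constructor
  · have h1 : ∑ p ∈ P, Real.log (1 + (1 : ℝ) / p) ≤ ∑ p ∈ P, (1 : ℝ) / p := by
      refine Finset.sum_le_sum fun p _ => ?_
      have := Real.log_le_sub_one_of_pos (show 0 < 1 + (1 : ℝ) / p by positivity)
      linarith
    have h2 := Real.log_le_log (by linarith) hlo
    rw [Real.log_mul (by norm_num) hprodpos.ne', hlogprod] at h2
    linarith
  · have h1 : ∑ p ∈ P, ((1 : ℝ) / p - ((1 : ℝ) / p) ^ 2) ≤ ∑ p ∈ P, Real.log (1 + (1 : ℝ) / p) := by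
      refine Finset.sum_le_sum fun p _ => ?_
      have hu : (0 : ℝ) ≤ (1 : ℝ) / p := by positivity
      set u := (1 : ℝ) / p
      have := Real.one_sub_inv_le_log_of_pos (show 0 < 1 + u by positivity)
      refine le_trans ?_ this
      have e : (1 + u) * (1 + u)⁻¹ = 1 := mul_inv_cancel₀ (by positivity)
      have hi : 0 ≤ (1 + u)⁻¹ := by positivity
      have : (1 + u)⁻¹ ≤ 1 - u + u ^ 2 := by
        rw [inv_le_iff_one_le_mul₀ (by positivity)]
        nlinarith [pow_nonneg hu 3]
      linarith
    rw [Finset.sum_sub_distrib, ← hlogprod] at h1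
    have h2 : ∏ p ∈ P, (1 + (1 : ℝ) / p) ≤ 2 * (1 + Real.log 16 + 2) * Real.log N := by
      nlinarith
    have h3 := Real.log_le_log hprodpos h2
    rw [Real.log_mul (by positivity) (by positivity)] at h3
    linarith


/-! ### Part 3 : primes in arithmetic progressions modulo `q ^ 2` -/

lemma dvd_prod_progression (M D a H : ℕ) (hM : M ∣ H.factorial) (hMD : Nat.Coprime D M) :
    M ∣ ∏ h ∈ Finset.range H, (a + D * h) := by
  rcases Nat.lt_or_ge 1 M with h1 | h1
  · obtain ⟨e, -, he⟩ := Nat.exists_mul_mod_eq_one_of_coprime hMD h1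
    have he' : D * e ≡ 1 [MOD M] := by
      rw [Nat.ModEq, he, Nat.mod_eq_of_lt h1]
    have h2 : ∀ h ∈ Finset.range H, a + D * h ≡ D * (a * e + h) [MOD M] := by
      intro h _
      have : a * (D * e) ≡ a * 1 [MOD M] := he'.mul_left a
      have h3 := (this.symm).add_right (D * h)
      rw [mul_one] at h3
      have h4 : a * (D * e) + D * h = D * (a * e + h) := by ring
      rwa [h4] at h3
    have h3 : ∏ h ∈ Finset.range H, (a + D * h) ≡ ∏ h ∈ Finset.range H, D * (a * e + h) [MOD M] :=
      Nat.ModEq.prod h2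
    rw [(h3.dvd_iff (dvd_refl M)), Finset.prod_mul_distrib, ← Nat.ascFactorial_eq_prod_range]
    exact (hM.trans (Nat.factorial_dvd_ascFactorial _ _)).mul_left _
  · have : M ≠ 0 := fun h => by
      rw [h] at hM
      exact Nat.factorial_ne_zero H (Nat.eq_zero_of_zero_dvd hM)
    have : M = 1 := by omega
    simp [this]

lemma sum_log_progression (q H a : ℕ) (hq : q.Prime) (B : Finset ℕ)
    (hB : ∀ p ∈ B, p.Prime ∧ H < p ∧ p < q ^ 2 * H ∧ p % q ^ 2 = a) :
    ∑ p ∈ B, Real.log p ≤ H * Real.log (2 * Real.exp 1 * (q : ℝ) ^ 2) := by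
  have hq2 : (2 : ℝ) ≤ q := by exact_mod_cast hq.two_le
  have hlog0 : 0 ≤ Real.log (2 * Real.exp 1 * (q : ℝ) ^ 2) := by
    refine Real.log_nonneg ?_
    have := Real.add_one_le_exp (1 : ℝ)
    nlinarith [mul_pos (show (0:ℝ) < 2 by norm_num) (Real.exp_pos 1)]
  rcases B.eq_empty_or_nonempty with rfl | ⟨p0, hp0⟩
  · simp; positivity
  have ha : 0 < a := by
    obtain ⟨h1, -, -, h4⟩ := hB p0 hp0
    rcases Nat.eq_zero_or_pos a with h | h
    · exfalso
      rw [h] at h4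
      have h5 : q ^ 2 ∣ p0 := Nat.dvd_of_mod_eq_zero h4
      have h6 : q * q ∣ p0 := by rwa [← sq]
      exact hq.one_lt.ne' (Nat.isUnit_iff.1 (h1.prime.irreducible.squarefree q h6))
    · exact h
  have haq : a < q ^ 2 := by
    obtain ⟨-, -, -, h4⟩ := hB p0 hp0
    rw [← h4]; exact Nat.mod_lt _ (pow_pos hq.pos 2)
  set v := H.factorial.factorization q with hv
  set M := H.factorial / q ^ v with hM
  have hMv : q ^ v * M = H.factorial := Nat.ordProj_mul_ordCompl_eq_self _ _
  have hMdvd : M ∣ H.factorial := Nat.ordCompl_dvd _ _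
  have hcop : Nat.Coprime (q ^ 2) M :=
    Nat.Coprime.pow_left 2 (Nat.coprime_ordCompl hq (Nat.factorial_ne_zero H))
  set N := ∏ h ∈ Finset.range H, (a + q ^ 2 * h) with hN
  have hMN : M ∣ N := dvd_prod_progression M (q ^ 2) a H hMdvd hcop
  have hBN : ∏ p ∈ B, p ∣ N := by
    refine Finset.prod_dvd_of_isRelPrime ?_ ?_
    · intro p hp p' hp' hne
      exact Nat.coprime_iff_isRelPrime.1 ((Nat.coprime_primes (hB p hp).1 (hB p' hp').1).2 hne)
    · intro p hp
      obtain ⟨h1, h2, h3, h4⟩ := hB p hp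
      have e : p = a + q ^ 2 * (p / q ^ 2) := by
        have := Nat.mod_add_div p (q ^ 2)
        rw [h4] at this; exact this.symm
      have hm : p / q ^ 2 ∈ Finset.range H := by
        rw [Finset.mem_range]
        exact Nat.div_lt_of_lt_mul h3
      have := Finset.dvd_prod_of_mem (fun h => a + q ^ 2 * h) hm
      rwa [← e] at this
  have hcop2 : Nat.Coprime (∏ p ∈ B, p) M := by
    refine Nat.Coprime.prod_left fun p hp => ?_
    obtain ⟨h1, h2, -, -⟩ := hB p hp
    rw [h1.coprime_iff_not_dvd]
    intro h
    exact absurd ((h1.dvd_factorial).1 (h.trans hMdvd)) (by omega)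
  have hNpos : 0 < N := Finset.prod_pos fun h _ => by omega
  have hle1 : (∏ p ∈ B, p) * M ≤ N := Nat.le_of_dvd hNpos (hcop2.mul_dvd_of_dvd_of_dvd hBN hMN)
  have hle2 : N ≤ (q ^ 2 * H) ^ H := by
    calc N ≤ ∏ h ∈ Finset.range H, (q ^ 2 * H) := by
          refine Finset.prod_le_prod' fun h hh => ?_
          rw [Finset.mem_range] at hh
          calc a + q ^ 2 * h ≤ q ^ 2 + q ^ 2 * h := by omega
            _ = q ^ 2 * (h + 1) := by ring
            _ ≤ q ^ 2 * H := Nat.mul_le_mul_left _ hh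
      _ = _ := by simp
  have hle3 : q ^ v ≤ 2 ^ H := by
    have := Fact.mk hq
    have h1 := sub_one_mul_padicValNat_factorial (p := q) H
    rw [← Nat.factorization_def _ hq, ← hv] at h1
    have h2 : q ≤ 2 ^ (q - 1) := by
      have := Nat.lt_pow_self (n := q - 1) (a := 2) (by norm_num)
      omega
    calc q ^ v ≤ (2 ^ (q - 1)) ^ v := Nat.pow_le_pow_left h2 v
      _ = 2 ^ ((q - 1) * v) := by rw [pow_mul]
      _ ≤ 2 ^ H := Nat.pow_le_pow_right (by norm_num) (by omega)
  have hle4 : (∏ p ∈ B, p) * H.factorial ≤ (q ^ 2 * H) ^ H * 2 ^ H := by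
    calc (∏ p ∈ B, p) * H.factorial = ((∏ p ∈ B, p) * M) * q ^ v := by rw [← hMv]; ring
      _ ≤ (q ^ 2 * H) ^ H * 2 ^ H := Nat.mul_le_mul (hle1.trans hle2) hle3
  have hle5 : ((∏ p ∈ B, p : ℕ) : ℝ) * H.factorial ≤ ((q : ℝ) ^ 2 * H) ^ H * 2 ^ H := by
    exact_mod_cast hle4
  have hfpos : (0 : ℝ) < H.factorial := by exact_mod_cast Nat.factorial_pos H
  have hexp : (H : ℝ) ^ H ≤ Real.exp 1 ^ H * H.factorial := by
    have := Real.pow_div_factorial_le_exp (H : ℝ) (by positivity) H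
    rw [div_le_iff₀ hfpos] at this
    rwa [← Real.exp_nat_mul, mul_one]
  have hle6 : ((∏ p ∈ B, p : ℕ) : ℝ) ≤ (2 * Real.exp 1 * (q : ℝ) ^ 2) ^ H := by
    refine le_of_mul_le_mul_right (hle5.trans ?_) hfpos
    calc ((q : ℝ) ^ 2 * H) ^ H * 2 ^ H = ((q : ℝ) ^ 2) ^ H * 2 ^ H * (H : ℝ) ^ H := by
          rw [mul_pow]; ring
      _ ≤ ((q : ℝ) ^ 2) ^ H * 2 ^ H * (Real.exp 1 ^ H * H.factorial) := by gcongr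
      _ = _ := by rw [mul_pow, mul_pow]; ring
  have hBpos : (0 : ℝ) < ((∏ p ∈ B, p : ℕ) : ℝ) := by
    norm_cast
    exact Finset.prod_pos fun p hp => (hB p hp).1.pos
  have h7 := Real.log_le_log hBpos hle6
  rw [Real.log_pow] at h7
  refine le_trans (le_of_eq ?_) h7
  push_cast
  rw [Real.log_prod]
  intro p hp
  have := (hB p hp).1.pos
  positivity

/-- The weight of the tail. -/
noncomputable def tailF (q : ℕ) : ℝ := Real.log (2 * Real.exp 1 * (q : ℝ) ^ 2) / (q : ℝ) ^ 2

lemma tailF_nonneg (q : ℕ) : 0 ≤ tailF q := by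
  unfold tailF
  rcases Nat.eq_zero_or_pos q with rfl | h
  · simp
  have hq : (1 : ℝ) ≤ q := by exact_mod_cast h
  refine div_nonneg (Real.log_nonneg ?_) (by positivity)
  have := Real.add_one_le_exp (1 : ℝ)
  nlinarith [mul_pos (show (0:ℝ) < 2 by norm_num) (Real.exp_pos 1)]

lemma tailF_summable : Summable tailF := by
  have hs : Summable (fun q : ℕ => 4 * (2 * Real.exp 1) ^ (1/4 : ℝ) * (1 / (q : ℝ) ^ (3/2 : ℝ))) :=
    (Real.summable_one_div_nat_rpow.2 (by norm_num)).mul_left _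
  refine Summable.of_nonneg_of_le tailF_nonneg (fun q => ?_) hs
  rcases Nat.eq_zero_or_pos q with rfl | h
  · simp only [tailF]; norm_num
  have hq : (0 : ℝ) < q := by exact_mod_cast h
  have h1 := Real.log_le_rpow_div (x := 2 * Real.exp 1 * (q : ℝ) ^ 2) (by positivity)
    (show (0 : ℝ) < 1/4 by norm_num)
  have h2 : (2 * Real.exp 1 * (q : ℝ) ^ 2) ^ (1/4 : ℝ)
      = (2 * Real.exp 1) ^ (1/4 : ℝ) * (q : ℝ) ^ (1/2 : ℝ) := by
    rw [Real.mul_rpow (by positivity) (by positivity), ← Real.rpow_natCast, ← Real.rpow_mul hq.le]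
    norm_num
  rw [h2] at h1
  have h3 : (q : ℝ) ^ 2 = (q : ℝ) ^ (1/2 : ℝ) * (q : ℝ) ^ (3/2 : ℝ) := by
    rw [← Real.rpow_add hq, ← Real.rpow_natCast]; norm_num
  have hp1 : 0 < (q : ℝ) ^ (1/2 : ℝ) := Real.rpow_pos_of_pos hq _
  have hp2 : 0 < (q : ℝ) ^ (3/2 : ℝ) := Real.rpow_pos_of_pos hq _
  unfold tailF
  calc Real.log (2 * Real.exp 1 * (q : ℝ) ^ 2) / (q : ℝ) ^ 2
      ≤ ((2 * Real.exp 1) ^ (1/4 : ℝ) * (q : ℝ) ^ (1/2 : ℝ) / (1/4)) / (q : ℝ) ^ 2 := by gcongr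
    _ = _ := by
      rw [h3]; field_simp

lemma exists_Q : ∃ Q : ℕ, 16 ≤ Q ∧ ∀ N : ℕ, ∑ q ∈ Finset.Ioc Q N, tailF q ≤ 1 / 32 := by
  have h := tailF_summable
  rw [summable_iff_vanishing_norm] at h
  obtain ⟨s, hs⟩ := h (1/32) (by norm_num)
  refine ⟨max 16 (s.sup id), le_max_left _ _, fun N => ?_⟩
  have := hs (Finset.Ioc (max 16 (s.sup id)) N) (by
    rw [Finset.disjoint_left]
    intro q hq hq'
    rw [Finset.mem_Ioc] at hq
    have := Finset.le_sup (f := id) hq'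
    have := le_max_right 16 (s.sup id)
    simp only [id] at *
    omega)
  exact (le_abs_self _).trans this.le


/-! ### Part 4 : many primes `p` with `m * p + 1` squarefree -/

open Filter in
lemma analytic_large (Q : ℕ) : ∀ᶠ x : ℝ in atTop,
    (Q : ℝ) ≤ x ^ (1/4 : ℝ) ∧ 2 * (Q : ℝ) ≤ x ^ (3/4 : ℝ) ∧ 100 ≤ x ∧
    (∀ y : ℝ, x ^ (3/4 : ℝ) ≤ y → 0.6 * y ≤ Chebyshev.theta y) ∧
    8 * Real.sqrt x * Real.log x ≤ x ^ (3/4 : ℝ) / 16 := by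
  have h1 : Tendsto (fun x : ℝ => x ^ (1/4 : ℝ)) atTop atTop := tendsto_rpow_atTop (by norm_num)
  have h3 : Tendsto (fun x : ℝ => x ^ (3/4 : ℝ)) atTop atTop := tendsto_rpow_atTop (by norm_num)
  have hth : ∀ᶠ y : ℝ in atTop, 0.6 * y ≤ Chebyshev.theta y := by
    have e1 : ∀ᶠ y : ℝ in atTop, ‖Real.log y‖ ≤ 0.001 * ‖y ^ (1/2 : ℝ)‖ :=
      (isLittleO_log_rpow_atTop (by norm_num)).bound (by norm_num)
    filter_upwards [e1, eventually_ge_atTop (10000 : ℝ)] with y hy1 hy2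
    have hy0 : 0 ≤ y := by linarith
    have := Chebyshev.theta_ge' (x := y) (by linarith)
    rw [← Real.sqrt_eq_rpow, Real.norm_of_nonneg (Real.sqrt_nonneg _),
      Real.norm_of_nonneg (Real.log_nonneg (by linarith))] at hy1
    have hs : Real.sqrt y * Real.sqrt y = y := Real.mul_self_sqrt hy0
    have hs1 : 100 ≤ Real.sqrt y := Real.le_sqrt_of_sq_le (by linarith)
    have hl2 : Real.log (y + 2) ≤ Real.log y + 1 := by
      have : Real.log (y + 2) ≤ Real.log (y * Real.exp 1) := by
        refine Real.log_le_log (by linarith) ?_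
        have := Real.add_one_le_exp (1 : ℝ)
        nlinarith
      rwa [Real.log_mul (by linarith) (Real.exp_pos 1).ne', Real.log_exp] at this
    have hlog2 := Real.log_two_gt_d9
    have hlog2' := Real.log_two_lt_d9
    have k1 : Real.sqrt y * Real.log y ≤ 0.001 * y := by
      calc Real.sqrt y * Real.log y ≤ Real.sqrt y * (0.001 * Real.sqrt y) := by gcongr
        _ = 0.001 * y := by rw [← hs]; ring_nf; rw [Real.sqrt_sq (Real.sqrt_nonneg _)]
    have k2 : Real.log y ≤ 0.001 * y := by nlinarith
    have k3 : (y - 1) * 0.69 ≤ (y - 1) * Real.log 2 := by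
      refine mul_le_mul_of_nonneg_left ?_ ?_ <;> linarith
    nlinarith
  obtain ⟨y0, hy0⟩ := eventually_atTop.1 hth
  have e2 : ∀ᶠ x : ℝ in atTop, ‖Real.log x‖ ≤ (1/128) * ‖x ^ (1/4 : ℝ)‖ :=
    (isLittleO_log_rpow_atTop (by norm_num)).bound (by norm_num)
  filter_upwards [h1.eventually_ge_atTop (Q : ℝ), h3.eventually_ge_atTop (2 * (Q : ℝ)),
    eventually_ge_atTop (100 : ℝ), h3.eventually_ge_atTop y0, e2] with x a1 a2 a3 a4 a5
  refine ⟨a1, a2, a3, fun y hy => hy0 y (a4.trans hy), ?_⟩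
  have hx : 0 < x := by linarith
  rw [Real.norm_of_nonneg (Real.rpow_nonneg hx.le _),
    Real.norm_of_nonneg (Real.log_nonneg (by linarith))] at a5
  have : x ^ (3/4 : ℝ) = Real.sqrt x * x ^ (1/4 : ℝ) := by
    rw [Real.sqrt_eq_rpow, ← Real.rpow_add hx]; norm_num
  rw [this]
  calc 8 * Real.sqrt x * Real.log x ≤ 8 * Real.sqrt x * (1/128 * x ^ (1/4 : ℝ)) := by gcongr
    _ = _ := by ring

lemma bad_count (Q : ℕ) (hQ : 16 ≤ Q) (x : ℝ) (a1 : (Q : ℝ) ≤ x ^ (1/4 : ℝ))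
    (a2 : 2 * (Q : ℝ) ≤ x ^ (3/4 : ℝ)) (a3 : 100 ≤ x) (m : ℕ) (hm : 1 ≤ m)
    (hmx : (m : ℝ) ≤ x ^ (1/4 : ℝ)) (q : ℕ) (hq : q.Prime) (hqm : ¬ q ∣ m) (hQq : Q < q)
    (hqx : (q : ℝ) ^ 2 ≤ x + 1) :
    ((((⌊x / m⌋₊).primesLE.filter (fun p : ℕ => x / m / Q < p)).filter
      (fun p => q ^ 2 ∣ m * p + 1)).card : ℝ) ≤ 2 * (x / m) / Real.log x * tailF q + 4 := by
  have hx : 0 < x := by linarith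
  have hm0 : (0 : ℝ) < m := by exact_mod_cast hm
  have hQ0 : (16 : ℝ) ≤ Q := by exact_mod_cast hQ
  have hq0 : (Q : ℝ) + 1 ≤ q := by exact_mod_cast hQq
  have hqpos : (0 : ℝ) < q := by linarith
  have hlx : 0 < Real.log x := Real.log_pos (by linarith)
  set y := x / m with hy
  have hyx : x ^ (3/4 : ℝ) ≤ y := by
    rw [hy, le_div_iff₀ hm0]
    calc x ^ (3/4 : ℝ) * m ≤ x ^ (3/4 : ℝ) * x ^ (1/4 : ℝ) := by gcongr
      _ = x := by rw [← Real.rpow_add hx]; norm_num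
  have hy0 : 0 < y := by positivity
  have hyQ : x ^ (1/2 : ℝ) ≤ y / Q := by
    rw [le_div_iff₀ (by linarith)]
    calc x ^ (1/2 : ℝ) * Q ≤ x ^ (1/2 : ℝ) * x ^ (1/4 : ℝ) := by gcongr
      _ = x ^ (3/4 : ℝ) := by rw [← Real.rpow_add hx]; norm_num
      _ ≤ y := hyx
  set B := ((⌊y⌋₊).primesLE.filter (fun p : ℕ => y / Q < p)).filter
      (fun p => q ^ 2 ∣ m * p + 1) with hB
  have hmem : ∀ p ∈ B, p.Prime ∧ (p : ℝ) ≤ y ∧ y / Q < p ∧ q ^ 2 ∣ m * p + 1 := by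
    intro p hp
    rw [hB, Finset.mem_filter, Finset.mem_filter, Nat.mem_primesLE] at hp
    exact ⟨hp.1.1.2, (Nat.le_floor_iff hy0.le).1 hp.1.1.1, hp.1.2, hp.2⟩
  rcases B.eq_empty_or_nonempty with h0 | ⟨p0, hp0⟩
  · rw [h0]
    have := tailF_nonneg q
    simp only [card_empty, Nat.cast_zero]
    positivity
  set H := ⌊y / (q : ℝ) ^ 2⌋₊ + 1 with hH
  have hHle : (H : ℝ) ≤ y / (q : ℝ) ^ 2 + 1 := by
    rw [hH]; push_cast
    have := Nat.floor_le (show 0 ≤ y / (q : ℝ) ^ 2 by positivity)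
    linarith
  have hHlt : (y : ℝ) < (q : ℝ) ^ 2 * H := by
    have := Nat.lt_floor_add_one (y / (q : ℝ) ^ 2)
    rw [div_lt_iff₀ (by positivity)] at this
    rw [hH]; push_cast; linarith
  have hHQ : (H : ℝ) ≤ y / Q := by
    refine hHle.trans ?_
    have e1 : y / (q : ℝ) ^ 2 ≤ y / Q * (1 / 2) := by
      rw [div_mul_div_comm, mul_one]
      refine div_le_div_of_nonneg_left hy0.le (by positivity) ?_
      nlinarith
    have e2 : 2 ≤ y / Q := by
      rw [le_div_iff₀ (by linarith)]; linarith
    linarith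
  have hprog := sum_log_progression q H (p0 % q ^ 2) hq B (by
    intro p hp
    obtain ⟨b1, b2, b3, b4⟩ := hmem p hp
    obtain ⟨-, -, -, c4⟩ := hmem p0 hp0
    refine ⟨b1, ?_, ?_, ?_⟩
    · exact_mod_cast hHQ.trans_lt b3
    · exact_mod_cast b2.trans_lt hHlt
    · have h1 : m * p + 1 ≡ m * p0 + 1 [MOD q ^ 2] :=
        ((Nat.modEq_zero_iff_dvd).2 b4).trans ((Nat.modEq_zero_iff_dvd).2 c4).symm
      have h2 : m * p ≡ m * p0 [MOD q ^ 2] := Nat.ModEq.add_right_cancel' 1 h1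
      refine Nat.ModEq.cancel_left_of_coprime ?_ h2
      exact Nat.Coprime.pow_left 2 ((hq.coprime_iff_not_dvd).2 hqm))
  have hlow : (B.card : ℝ) * (Real.log x / 2) ≤ ∑ p ∈ B, Real.log p := by
    rw [← nsmul_eq_mul]
    refine Finset.card_nsmul_le_sum _ _ _ fun p hp => ?_
    obtain ⟨b1, b2, b3, b4⟩ := hmem p hp
    have : Real.log (x ^ (1/2 : ℝ)) ≤ Real.log p :=
      Real.log_le_log (by positivity) (hyQ.trans b3.le)
    rw [Real.log_rpow hx] at this
    linarith
  have hexp : Real.exp 1 < 3 := by linarith [Real.exp_one_lt_d9]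
  have hlq : Real.log (2 * Real.exp 1 * (q : ℝ) ^ 2) ≤ 2 * Real.log x := by
    have : 2 * Real.log x = Real.log (x ^ 2) := by rw [Real.log_pow]; norm_num
    rw [this]
    refine Real.log_le_log (by positivity) ?_
    calc 2 * Real.exp 1 * (q : ℝ) ^ 2 ≤ 2 * 3 * (x + 1) := by gcongr
      _ ≤ x ^ 2 := by nlinarith
  have hlq0 : 0 ≤ Real.log (2 * Real.exp 1 * (q : ℝ) ^ 2) := by
    refine Real.log_nonneg ?_
    have := Real.add_one_le_exp (1 : ℝ)
    nlinarith
  have hfin : (B.card : ℝ) * (Real.log x / 2) ≤ y * tailF q + 2 * Real.log x := by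
    refine (hlow.trans hprog).trans ?_
    calc (H : ℝ) * Real.log (2 * Real.exp 1 * (q : ℝ) ^ 2)
        ≤ (y / (q : ℝ) ^ 2 + 1) * Real.log (2 * Real.exp 1 * (q : ℝ) ^ 2) := by gcongr
      _ = y * tailF q + Real.log (2 * Real.exp 1 * (q : ℝ) ^ 2) := by unfold tailF; ring
      _ ≤ _ := by linarith
  have : (B.card : ℝ) ≤ (y * tailF q + 2 * Real.log x) / (Real.log x / 2) := by
    rwa [le_div_iff₀ (by positivity)]
  refine this.trans (le_of_eq ?_)
  field_simp
  ring

lemma good_primes (Q : ℕ) (hQ : 16 ≤ Q) (htail : ∀ N : ℕ, ∑ q ∈ Finset.Ioc Q N, tailF q ≤ 1 / 32)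
    (x : ℝ) (a1 : (Q : ℝ) ≤ x ^ (1/4 : ℝ))
    (a2 : 2 * (Q : ℝ) ≤ x ^ (3/4 : ℝ)) (a3 : 100 ≤ x)
    (a4 : ∀ y : ℝ, x ^ (3/4 : ℝ) ≤ y → 0.6 * y ≤ Chebyshev.theta y)
    (a5 : 8 * Real.sqrt x * Real.log x ≤ x ^ (3/4 : ℝ) / 16) (m : ℕ) (hm : 1 ≤ m)
    (hmx : (m : ℝ) ≤ x ^ (1/4 : ℝ)) (hmQ : ∀ q : ℕ, q.Prime → q ≤ Q → q ∣ m) :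
    x / m / (4 * Real.log x) ≤
    ((((⌊x / m⌋₊).primesLE.filter (fun p : ℕ => x / m / Q < p)).filter
      (fun p => Squarefree (m * p + 1))).card : ℝ) := by
  have hx : 0 < x := by linarith
  have hm0 : (0 : ℝ) < m := by exact_mod_cast hm
  have hQ0 : (16 : ℝ) ≤ Q := by exact_mod_cast hQ
  have hlx : 0 < Real.log x := Real.log_pos (by linarith)
  have hbad := bad_count Q hQ x a1 a2 a3 m hm hmx
  set y := x / m with hy
  have hyx : x ^ (3/4 : ℝ) ≤ y := by
    rw [hy, le_div_iff₀ hm0]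
    calc x ^ (3/4 : ℝ) * m ≤ x ^ (3/4 : ℝ) * x ^ (1/4 : ℝ) := by gcongr
      _ = x := by rw [← Real.rpow_add hx]; norm_num
  have hy0 : 0 < y := by positivity
  have hylex : y ≤ x := by
    rw [hy]; exact div_le_self hx.le (by exact_mod_cast hm)
  set PR := (⌊y⌋₊).primesLE.filter (fun p : ℕ => y / Q < p) with hPR
  -- all primes
  have hPRcard : 0.5 * y / Real.log x ≤ (PR.card : ℝ) := by
    rw [div_le_iff₀ hlx]
    have h1 := a4 y hyx
    have h2 := Chebyshev.theta_le_log4_mul_x (show 0 ≤ y / Q by positivity)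
    rw [Chebyshev.theta_eq_sum_primesLE] at h1 h2
    rw [← Finset.sum_filter_add_sum_filter_not _ (fun p : ℕ => y / Q < p), ← hPR] at h1
    have h3 : ∑ p ∈ (⌊y⌋₊).primesLE with ¬ (y / Q < (p : ℕ)), Real.log p
        ≤ ∑ p ∈ (⌊y / Q⌋₊).primesLE, Real.log p := by
      refine Finset.sum_le_sum_of_subset_of_nonneg ?_ ?_
      · intro p hp
        rw [Finset.mem_filter, Nat.mem_primesLE, not_lt] at hp
        rw [Nat.mem_primesLE]
        exact ⟨Nat.le_floor hp.2, hp.1.2⟩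
      · intro p hp _
        exact Real.log_nonneg (by exact_mod_cast (Nat.mem_primesLE.1 hp).2.one_lt.le)
    have h4 : ∑ p ∈ PR, Real.log p ≤ PR.card * Real.log x := by
      rw [← nsmul_eq_mul]
      refine Finset.sum_le_card_nsmul _ _ _ fun p hp => ?_
      rw [hPR, Finset.mem_filter, Nat.mem_primesLE] at hp
      refine Real.log_le_log (by exact_mod_cast hp.1.2.pos) ?_
      exact ((Nat.le_floor_iff hy0.le).1 hp.1.1).trans hylex
    have h5 : Real.log 4 * (y / Q) ≤ 0.1 * y := by
      have : Real.log 4 = 2 * Real.log 2 := by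
        rw [show (4 : ℝ) = 2 ^ 2 by norm_num, Real.log_pow]; norm_num
      have hl := Real.log_two_lt_d9
      have : y / Q ≤ y / 16 := div_le_div_of_nonneg_left hy0.le (by norm_num) hQ0
      have h0 : 0 ≤ y / Q := by positivity
      nlinarith
    linarith
  -- the bad ones
  set R := Nat.sqrt ⌊x + 1⌋₊ with hR
  have hRle : ∀ q : ℕ, q ≤ R ↔ (q : ℝ) ^ 2 ≤ x + 1 := by
    intro q
    rw [hR, Nat.le_sqrt', Nat.le_floor_iff (by linarith)]
    push_cast; rfl
  have hRs : (R : ℝ) ≤ 2 * Real.sqrt x := by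
    have h1 := (hRle R).1 le_rfl
    have h2 : (0 : ℝ) ≤ R := by positivity
    have h3 := Real.sq_sqrt hx.le
    have h4 := Real.sqrt_nonneg x
    nlinarith
  set Qs := (Finset.Ioc Q R).filter Nat.Prime with hQs
  have hsub : PR.filter (fun p => ¬ Squarefree (m * p + 1)) ⊆
      Qs.biUnion (fun q => PR.filter (fun p => q ^ 2 ∣ m * p + 1)) := by
    intro p hp
    rw [Finset.mem_filter] at hp
    obtain ⟨hpR, hns⟩ := hp
    rw [Nat.squarefree_iff_prime_squarefree] at hns
    push Not at hns
    obtain ⟨q, hq, hdvd⟩ := hns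
    rw [← sq] at hdvd
    rw [Finset.mem_biUnion]
    refine ⟨q, ?_, Finset.mem_filter.2 ⟨hpR, hdvd⟩⟩
    rw [hQs, Finset.mem_filter, Finset.mem_Ioc]
    refine ⟨⟨?_, ?_⟩, hq⟩
    · by_contra hle
      have h1 : q ∣ m := hmQ q hq (by omega)
      have h2 : q ∣ m * p + 1 := (dvd_pow_self q two_ne_zero).trans hdvd
      have h3 : q ∣ 1 := (Nat.dvd_add_right (h1.mul_right p)).1 h2
      exact hq.one_lt.ne' (Nat.dvd_one.1 h3)
    · rw [hRle]
      have h1 : q ^ 2 ≤ m * p + 1 := Nat.le_of_dvd (by omega) hdvd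
      have h2 : (q : ℝ) ^ 2 ≤ m * p + 1 := by exact_mod_cast h1
      rw [hPR, Finset.mem_filter, Nat.mem_primesLE] at hpR
      have h3 := (Nat.le_floor_iff hy0.le).1 hpR.1.1
      rw [hy, le_div_iff₀ hm0] at h3
      linarith
  have hbadcard : ((PR.filter (fun p => ¬ Squarefree (m * p + 1))).card : ℝ)
      ≤ y / Real.log x / 8 := by
    have h1 := (Finset.card_le_card hsub).trans Finset.card_biUnion_le
    have h2 : ((PR.filter (fun p => ¬ Squarefree (m * p + 1))).card : ℝ)
      ≤ ∑ q ∈ Qs, ((PR.filter (fun p => q ^ 2 ∣ m * p + 1)).card : ℝ) := by exact_mod_cast h1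
    refine h2.trans ?_
    have h3 : ∑ q ∈ Qs, ((PR.filter (fun p => q ^ 2 ∣ m * p + 1)).card : ℝ)
        ≤ ∑ q ∈ Qs, (2 * y / Real.log x * tailF q + 4) := by
      refine Finset.sum_le_sum fun q hq => ?_
      rw [hQs, Finset.mem_filter, Finset.mem_Ioc] at hq
      obtain ⟨⟨b1, b2⟩, b3⟩ := hq
      by_cases hqm : q ∣ m
      · have : PR.filter (fun p => q ^ 2 ∣ m * p + 1) = ∅ := by
          rw [Finset.filter_eq_empty_iff]
          intro p _ hdvd
          have h2 : q ∣ m * p + 1 := (dvd_pow_self q two_ne_zero).trans hdvd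
          have h3 : q ∣ 1 := (Nat.dvd_add_right (hqm.mul_right p)).1 h2
          exact b3.one_lt.ne' (Nat.dvd_one.1 h3)
        rw [this]
        have := tailF_nonneg q
        simp only [card_empty, Nat.cast_zero]
        positivity
      · exact hbad q b3 hqm b1 ((hRle q).1 b2)
    refine h3.trans ?_
    have h4 : ∑ q ∈ Qs, (2 * y / Real.log x * tailF q + 4)
        ≤ ∑ q ∈ Finset.Ioc Q R, (2 * y / Real.log x * tailF q + 4) := by
      refine Finset.sum_le_sum_of_subset_of_nonneg (Finset.filter_subset _ _) ?_
      intro q _ _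
      have := tailF_nonneg q
      positivity
    refine h4.trans ?_
    rw [Finset.sum_add_distrib, ← Finset.mul_sum, Finset.sum_const, Nat.card_Ioc, nsmul_eq_mul]
    have h5 : 2 * y / Real.log x * ∑ q ∈ Finset.Ioc Q R, tailF q ≤ 2 * y / Real.log x * (1 / 32) :=
      mul_le_mul_of_nonneg_left (htail R) (by positivity)
    have h6 : ((R - Q : ℕ) : ℝ) ≤ R := by exact_mod_cast Nat.sub_le R Q
    have h7 : 8 * Real.sqrt x ≤ y / Real.log x / 16 := by
      rw [div_div, le_div_iff₀ (by positivity)]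
      linarith
    have h8 : 2 * y / Real.log x * (1 / 32) = y / Real.log x / 16 := by ring
    linarith
  have hsplit := Finset.card_filter_add_card_filter_not (s := PR) (fun p => Squarefree (m * p + 1))
  have hsplit' : ((PR.filter (fun p => Squarefree (m * p + 1))).card : ℝ)
    + ((PR.filter (fun p => ¬ Squarefree (m * p + 1))).card : ℝ) = PR.card := by
    exact_mod_cast hsplit
  have e1 : y / (4 * Real.log x) = y / Real.log x / 4 := by
    rw [div_div y (Real.log x) 4, mul_comm 4 (Real.log x)]
  have e2 : 0.5 * y / Real.log x = 0.5 * (y / Real.log x) := by ring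
  have e3 : 0 < y / Real.log x := by positivity
  rw [e1]
  rw [e2] at hPRcard
  linarith


/-! ### Part 5 : the main sum and the assembly -/

lemma factorial_le_stirling (j : ℕ) (hj : 1 ≤ j) :
    (j.factorial : ℝ) ≤ Real.exp 1 * Real.sqrt j * ((j : ℝ) / Real.exp 1) ^ j := by
  have h := Stirling.stirlingSeq'_antitone (Nat.zero_le (j - 1))
  simp only [Function.comp, Nat.succ_eq_add_one, zero_add, Nat.sub_add_cancel hj] at h
  rw [Stirling.stirlingSeq_one, Stirling.stirlingSeq] at h
  have hj0 : (0 : ℝ) < j := by exact_mod_cast hj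
  rw [div_le_iff₀ (by positivity)] at h
  refine h.trans (le_of_eq ?_)
  rw [Real.sqrt_mul (by norm_num)]
  have : Real.sqrt 2 ≠ 0 := by positivity
  field_simp

lemma pow_div_factorial_lower (S c : ℝ) (hS : 0 < S) (j : ℕ) (hj : 1 ≤ j)
    (h : |(j : ℝ) - S| ≤ c * Real.sqrt S) :
    Real.exp (S - c ^ 2) / (Real.exp 1 * Real.sqrt j) ≤ S ^ j / j.factorial := by
  have hj0 : (0 : ℝ) < j := by exact_mod_cast hj
  have hf : (0 : ℝ) < j.factorial := by exact_mod_cast Nat.factorial_pos j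
  have h1 : ((j : ℝ) - S) ^ 2 ≤ c ^ 2 * S := by
    have := pow_le_pow_left₀ (abs_nonneg _) h 2
    rwa [sq_abs, mul_pow, Real.sq_sqrt hS.le] at this
  have h2 : S - c ^ 2 ≤ j * (1 + Real.log (S / j)) := by
    have e := Real.one_sub_inv_le_log_of_pos (show 0 < S / j by positivity)
    rw [inv_div] at e
    have e2 : (j : ℝ) * (1 + (1 - j / S)) ≤ j * (1 + Real.log (S / j)) := by gcongr
    refine le_trans ?_ e2
    have e3 : (j : ℝ) * (1 + (1 - j / S)) = S - ((j : ℝ) - S) ^ 2 / S := by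
      field_simp; ring
    rw [e3]
    have : ((j : ℝ) - S) ^ 2 / S ≤ c ^ 2 := by rwa [div_le_iff₀ hS]
    linarith
  have h3 : Real.exp (j * (1 + Real.log (S / j))) = S ^ j / ((j : ℝ) / Real.exp 1) ^ j := by
    rw [Real.exp_nat_mul, Real.exp_add, Real.exp_log (by positivity), ← div_pow]
    congr 1
    field_simp
  calc Real.exp (S - c ^ 2) / (Real.exp 1 * Real.sqrt j)
      ≤ Real.exp (j * (1 + Real.log (S / j))) / (Real.exp 1 * Real.sqrt j) := by gcongr
    _ = S ^ j / (Real.exp 1 * Real.sqrt j * ((j : ℝ) / Real.exp 1) ^ j) := by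
      rw [h3, div_div]; congr 1; ring
    _ ≤ S ^ j / j.factorial := by
      exact div_le_div_of_nonneg_left (by positivity) hf (factorial_le_stirling j hj)

lemma truncated_sum_lower (Q N i : ℕ) (hQ : 16 ≤ Q) (hN : 1 ≤ N) (P : Finset ℕ)
    (hP : P = N.primesLE.filter (fun p => Q < p)) (S L : ℝ) (hS : S = ∑ p ∈ P, (1 : ℝ) / p)
    (hS0 : 0 < S) (hL : 5 * (Real.log N + Real.log 4) ≤ L) (hi : ((i : ℝ) + 2) ≤ 2 * S) :
    S ^ (i + 2) / (i + 2).factorial / 4 ≤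
      ∑ T ∈ (P.powersetCard (i + 2)).filter (fun T => ∑ p ∈ T, Real.log (p : ℕ) ≤ L),
        ∏ p ∈ T, (1 : ℝ) / p := by
  have hPm : ∀ p ∈ P, p.Prime ∧ Q < p ∧ p ≤ N := by
    intro p hp
    rw [hP, Finset.mem_filter, Nat.mem_primesLE] at hp
    exact ⟨hp.1.2, hp.2, hp.1.1⟩
  have ha : ∀ p : ℕ, (0 : ℝ) ≤ (1 : ℝ) / p := fun p => by positivity
  have hlo := eSum_lower P (fun p => (1 : ℝ) / p) ha i
  have hup := eSum_upper P (fun p => (1 : ℝ) / p) ha (i + 1)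
  have hsq := sum_inv_sq_le P Q (fun p hp => (hPm p hp).2.1)
  have hw := eSum_weighted P (fun p => (1 : ℝ) / p) (fun p => Real.log (p : ℕ)) (i + 1)
  rw [← hS] at hlo hup
  set e := eSum P (fun p : ℕ => (1 : ℝ) / p) with he
  have hterm : ∀ T : Finset ℕ, 0 ≤ ∏ p ∈ T, (1 : ℝ) / p := fun T =>
    Finset.prod_nonneg fun p _ => by positivity
  have hlogN : 0 ≤ Real.log N := Real.log_nonneg (by exact_mod_cast hN)
  have hlog4 : 0 < Real.log 4 := Real.log_pos (by norm_num)
  have hL0 : 0 < L := by linarith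
  set F : ℝ := ((i + 2).factorial : ℝ) with hF
  have hF0 : 0 < F := by rw [hF]; exact_mod_cast Nat.factorial_pos _
  have hF1 : F = ((i : ℝ) + 2) * ((i + 1).factorial : ℝ) := by
    rw [hF, show i + 2 = (i + 1) + 1 by ring, Nat.factorial_succ]; push_cast; ring
  -- main term
  have hmain : 0.7 * S ^ (i + 2) ≤ F * e (i + 2) := by
    refine le_trans ?_ hlo
    have h17 : (2 : ℝ) / (Q + 1) ≤ 2 / 17 := by
      refine div_le_div_of_nonneg_left (by norm_num) (by norm_num) ?_
      have : (16 : ℝ) ≤ Q := by exact_mod_cast hQ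
      linarith
    have h1 : ((i : ℝ) + 2) * (i + 1) / 2 * (∑ p ∈ P, ((1 : ℝ) / p) ^ 2) ≤ 0.3 * S ^ 2 := by
      have h2 : ((i : ℝ) + 2) * (i + 1) / 2 ≤ 2 * S ^ 2 := by nlinarith
      have h3 : (∑ p ∈ P, ((1 : ℝ) / p) ^ 2) ≤ 2 / 17 := hsq.trans h17
      calc _ ≤ 2 * S ^ 2 * (2 / 17) := by
            refine mul_le_mul h2 h3 (Finset.sum_nonneg fun _ _ => sq_nonneg _) (by positivity)
        _ ≤ _ := by nlinarith [sq_nonneg S]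
    have h2 := mul_le_mul_of_nonneg_right h1 (pow_nonneg hS0.le i)
    have h3 : S ^ (i + 2) = S ^ 2 * S ^ i := by ring
    rw [h3]
    linarith
  -- Markov
  have hmark : L * ∑ T ∈ (P.powersetCard (i + 2)).filter
        (fun T => ¬ (∑ p ∈ T, Real.log (p : ℕ) ≤ L)), ∏ p ∈ T, (1 : ℝ) / p
      ≤ (Real.log N + Real.log 4) * e (i + 1) := by
    have h1 : L * ∑ T ∈ (P.powersetCard (i + 2)).filter
        (fun T => ¬ (∑ p ∈ T, Real.log (p : ℕ) ≤ L)), ∏ p ∈ T, (1 : ℝ) / p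
        ≤ ∑ T ∈ P.powersetCard (i + 1 + 1), (∑ p ∈ T, Real.log (p : ℕ)) * ∏ p ∈ T, (1 : ℝ) / p := by
      rw [Finset.mul_sum]
      refine le_trans (Finset.sum_le_sum
        (g := fun T : Finset ℕ => (∑ p ∈ T, Real.log p) * ∏ p ∈ T, (1 : ℝ) / p)
        fun T hT => ?_) (Finset.sum_le_sum_of_subset_of_nonneg (Finset.filter_subset _ _) ?_)
      · rw [Finset.mem_filter, not_le] at hT
        exact mul_le_mul_of_nonneg_right hT.2.le (hterm T)
      · intro T hT _
        rw [Finset.mem_powersetCard] at hT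
        refine mul_nonneg (Finset.sum_nonneg fun p hp => Real.log_nonneg ?_) (hterm T)
        exact_mod_cast (hPm p (hT.1 hp)).1.one_lt.le
    refine h1.trans ?_
    rw [hw]
    calc ∑ p ∈ P, Real.log p * (1 / (p : ℝ)) * eSum (P.erase p) (fun p : ℕ => (1 : ℝ) / p) (i + 1)
        ≤ ∑ p ∈ P, Real.log p / p * e (i + 1) := by
          refine Finset.sum_le_sum fun p hp => ?_
          have hlp : 0 ≤ Real.log p := Real.log_nonneg (by exact_mod_cast (hPm p hp).1.one_lt.le)
          rw [mul_one_div]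
          exact mul_le_mul_of_nonneg_left (eSum_mono (Finset.erase_subset _ _) _ ha _)
            (by positivity)
      _ = (∑ p ∈ P, Real.log p / p) * e (i + 1) := by rw [Finset.sum_mul]
      _ ≤ (Real.log N + Real.log 4) * e (i + 1) := by
          refine mul_le_mul_of_nonneg_right ?_ (eSum_nonneg _ _ ha _)
          refine le_trans ?_ (sum_log_div_le N hN)
          rw [hP]
          refine Finset.sum_le_sum_of_subset_of_nonneg (Finset.filter_subset _ _) fun p hp _ => ?_
          have := Real.log_nonneg
            (show (1 : ℝ) ≤ p by exact_mod_cast (Nat.mem_primesLE.1 hp).2.one_lt.le)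
          positivity
  have hsplit := Finset.sum_filter_add_sum_filter_not (P.powersetCard (i + 2))
    (fun T => ∑ p ∈ T, Real.log (p : ℕ) ≤ L) (fun T => ∏ p ∈ T, (1 : ℝ) / p)
  have hsplit2 : ∑ T ∈ P.powersetCard (i + 2), ∏ p ∈ T, (1 : ℝ) / p = e (i + 2) := rfl
  rw [hsplit2] at hsplit
  set A := ∑ T ∈ (P.powersetCard (i + 2)).filter (fun T => ∑ p ∈ T, Real.log (p : ℕ) ≤ L),
        ∏ p ∈ T, (1 : ℝ) / p with hA
  set B := ∑ T ∈ (P.powersetCard (i + 2)).filter (fun T => ¬ (∑ p ∈ T, Real.log (p : ℕ) ≤ L)),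
        ∏ p ∈ T, (1 : ℝ) / p with hB
  have hBbound : F * B ≤ 0.4 * S ^ (i + 2) := by
    have h1 : (5 : ℝ) * B ≤ e (i + 1) := by
      have he0 : 0 ≤ e (i + 1) := eSum_nonneg _ _ ha _
      have : (Real.log N + Real.log 4) * e (i + 1) ≤ L / 5 * e (i + 1) :=
        mul_le_mul_of_nonneg_right (by linarith) he0
      have h2 : L * (5 * B) ≤ L * e (i + 1) := by linarith
      exact le_of_mul_le_mul_left h2 hL0
    have h3 : F * (5 * B) ≤ F * e (i + 1) := mul_le_mul_of_nonneg_left h1 hF0.le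
    have h4 : F * e (i + 1) ≤ ((i : ℝ) + 2) * S ^ (i + 1) := by
      rw [hF1, mul_assoc]
      exact mul_le_mul_of_nonneg_left hup (by positivity)
    have h5 : ((i : ℝ) + 2) * S ^ (i + 1) ≤ 2 * S * S ^ (i + 1) :=
      mul_le_mul_of_nonneg_right hi (by positivity)
    have h6 : 2 * S * S ^ (i + 1) = 2 * S ^ (i + 2) := by ring
    linarith
  have hfin : S ^ (i + 2) * (1 / 4) ≤ F * A := by
    have : F * A = F * e (i + 2) - F * B := by rw [← hsplit]; ring
    have := pow_pos hS0 (i + 2)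
    linarith
  rw [div_div, div_le_iff₀ (by positivity)]
  linarith

lemma count_lower (Q N j : ℕ) (x : ℝ) (hx : 0 ≤ x) (𝒯 : Finset (Finset ℕ))
    (h𝒯 : ∀ T ∈ 𝒯, (∀ p ∈ T, p.Prime ∧ Q < p ∧ p ≤ N) ∧ T.card = j) (hQN : Q ≤ N)
    (G : Finset ℕ → Finset ℕ)
    (hG : ∀ T ∈ 𝒯, ∀ p ∈ G T, p.Prime ∧ N < p ∧
      ((((∏ p ∈ Q.primesLE, p) * ∏ p ∈ T, p) * p : ℕ) : ℝ) ≤ x ∧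
      Squarefree (((∏ p ∈ Q.primesLE, p) * ∏ p ∈ T, p) * p + 1)) :
    ∑ T ∈ 𝒯, (G T).card ≤ ((Finset.Icc 1 ⌊x⌋₊).filter
          (fun n => Squarefree (n * (n + 1)) ∧
            n.primeFactors.card = Q.primesLE.card + j + 1)).card := by
  rw [← Finset.card_sigma]
  have hQp : ∀ p ∈ Q.primesLE, p.Prime ∧ p ≤ Q := fun p hp =>
    ⟨(Nat.mem_primesLE.1 hp).2, (Nat.mem_primesLE.1 hp).1⟩
  set U : (Σ _ : Finset ℕ, ℕ) → Finset ℕ := fun z => insert z.2 (Q.primesLE ∪ z.1) with hU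
  have hz : ∀ z ∈ 𝒯.sigma G, z.1 ∈ 𝒯 ∧ z.2 ∈ G z.1 := fun z hz => Finset.mem_sigma.1 hz
  have hdisj : ∀ z ∈ 𝒯.sigma G, Disjoint Q.primesLE z.1 := by
    intro z hzm
    rw [Finset.disjoint_left]
    intro p hp hp'
    have h1 := (hQp p hp).2
    have h2 := ((h𝒯 z.1 (hz z hzm).1).1 p hp').2.1
    omega
  have hnot : ∀ z ∈ 𝒯.sigma G, z.2 ∉ Q.primesLE ∪ z.1 := by
    intro z hzm hmem
    have h0 := (hG z.1 (hz z hzm).1 z.2 (hz z hzm).2).2.1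
    rcases Finset.mem_union.1 hmem with h | h
    · have := (hQp _ h).2; omega
    · have := ((h𝒯 z.1 (hz z hzm).1).1 _ h).2.2; omega
  have hUp : ∀ z ∈ 𝒯.sigma G, ∀ p ∈ U z, p.Prime := by
    intro z hzm p hp
    simp only [hU, Finset.mem_insert, Finset.mem_union] at hp
    rcases hp with h | h | h
    · rw [h]; exact (hG z.1 (hz z hzm).1 z.2 (hz z hzm).2).1
    · exact (hQp p h).1
    · exact ((h𝒯 z.1 (hz z hzm).1).1 p h).1
  have hprod : ∀ z ∈ 𝒯.sigma G, ∏ p ∈ U z, p = ((∏ p ∈ Q.primesLE, p) * ∏ p ∈ z.1, p) * z.2 := by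
    intro z hzm
    simp only [hU]
    rw [Finset.prod_insert (hnot z hzm), Finset.prod_union (hdisj z hzm), mul_comm]
  refine Finset.card_le_card_of_injOn (fun z => ∏ p ∈ U z, p) ?_ ?_
  · intro z hzm
    rw [Finset.mem_coe] at hzm
    have hpf := Nat.primeFactors_prod (hUp z hzm)
    have hpos : 0 < ∏ p ∈ U z, p := Finset.prod_pos fun p hp => (hUp z hzm p hp).pos
    obtain ⟨g1, g2, g3, g4⟩ := hG z.1 (hz z hzm).1 z.2 (hz z hzm).2
    rw [← hprod z hzm] at g3 g4
    simp only [Finset.coe_filter, Set.mem_ofPred_eq, Finset.mem_Icc]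
    refine ⟨⟨hpos, Nat.le_floor g3⟩, ?_, ?_⟩
    · rw [Nat.squarefree_mul (by simp)]
      refine ⟨?_, g4⟩
      refine Finset.squarefree_prod_of_pairwise_isCoprime ?_ ?_
      · intro p hp p' hp' hne
        exact Nat.coprime_iff_isRelPrime.1
          ((Nat.coprime_primes (hUp z hzm p hp) (hUp z hzm p' hp')).2 hne)
      · intro p hp
        exact (hUp z hzm p hp).prime.irreducible.squarefree
    · rw [hpf]
      simp only [hU]
      rw [Finset.card_insert_of_notMem (hnot z hzm), Finset.card_union_of_disjoint (hdisj z hzm),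
        (h𝒯 z.1 (hz z hzm).1).2]
  · intro z hzm z' hzm' h
    rw [Finset.mem_coe] at hzm hzm'
    have hUU : U z = U z' := by
      rw [← Nat.primeFactors_prod (hUp z hzm), ← Nat.primeFactors_prod (hUp z' hzm')]
      exact congrArg _ h
    have hT : ∀ z ∈ 𝒯.sigma G, (U z).filter (fun p => Q < p ∧ p ≤ N) = z.1 := by
      intro z hzm
      have h0 := (hG z.1 (hz z hzm).1 z.2 (hz z hzm).2).2.1
      ext p
      simp only [hU, Finset.mem_filter, Finset.mem_insert, Finset.mem_union]
      constructor
      · rintro ⟨h1 | h1 | h1, h2, h3⟩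
        · omega
        · have := (hQp p h1).2; omega
        · exact h1
      · intro h1
        exact ⟨Or.inr (Or.inr h1), ((h𝒯 z.1 (hz z hzm).1).1 p h1).2⟩
    have hp : ∀ z ∈ 𝒯.sigma G, (U z).filter (fun p => N < p) = {z.2} := by
      intro z hzm
      have h0 := (hG z.1 (hz z hzm).1 z.2 (hz z hzm).2).2.1
      ext p
      simp only [hU, Finset.mem_filter, Finset.mem_insert, Finset.mem_union, Finset.mem_singleton]
      constructor
      · rintro ⟨h1 | h1 | h1, h2⟩
        · exact h1
        · have := (hQp p h1).2; omega
        · have := ((h𝒯 z.1 (hz z hzm).1).1 p h1).2.2; omega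
      · rintro rfl
        exact ⟨Or.inl rfl, h0⟩
    have e1 : z.1 = z'.1 := by rw [← hT z hzm, ← hT z' hzm', hUU]
    have e2 : z.2 = z'.2 := by
      have := hp z hzm
      rw [hUU, hp z' hzm'] at this
      exact (Finset.singleton_injective this).symm
    obtain ⟨a, b⟩ := z
    obtain ⟨a', b'⟩ := z'
    simp only at e1 e2
    subst e1; subst e2; rfl

open Filter in
lemma analytic_large2 (Q PQ : ℕ) (s0 : ℝ) : ∀ᶠ x : ℝ in atTop,
    x ^ (1/200 : ℝ) ≤ x ^ (1/100 : ℝ) - 1 ∧ ((3 : ℝ) + Q) + 1 ≤ x ^ (1/100 : ℝ) ∧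
    50 ≤ Real.log x ∧ (PQ : ℝ) ≤ x ^ (1/20 : ℝ) ∧
    s0 ≤ Real.sqrt (Real.log (Real.log x)) := by
  have t1 : Tendsto (fun x : ℝ => x ^ (1/200 : ℝ)) atTop atTop := tendsto_rpow_atTop (by norm_num)
  have t2 : Tendsto (fun x : ℝ => x ^ (1/100 : ℝ)) atTop atTop := tendsto_rpow_atTop (by norm_num)
  have t3 : Tendsto (fun x : ℝ => x ^ (1/20 : ℝ)) atTop atTop := tendsto_rpow_atTop (by norm_num)
  have t4 : Tendsto (fun x : ℝ => Real.sqrt (Real.log (Real.log x))) atTop atTop :=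
    Real.tendsto_sqrt_atTop.comp (Real.tendsto_log_atTop.comp Real.tendsto_log_atTop)
  filter_upwards [t1.eventually_ge_atTop 2, t2.eventually_ge_atTop (((3 : ℝ) + Q) + 1),
    Real.tendsto_log_atTop.eventually_ge_atTop 50, t3.eventually_ge_atTop (PQ : ℝ),
    t4.eventually_ge_atTop s0, eventually_gt_atTop 0] with x h1 h2 h3 h4 h5 h6
  refine ⟨?_, h2, h3, h4, h5⟩
  have e : x ^ (1/100 : ℝ) = x ^ (1/200 : ℝ) * x ^ (1/200 : ℝ) := by
    rw [← Real.rpow_add h6]; norm_num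
  rw [e]
  nlinarith

lemma sum_S_bound (M : ℝ) (hM : ∀ N : ℕ, 3 ≤ N →
    |∑ p ∈ N.primesLE, (1:ℝ)/p - Real.log (Real.log N)| ≤ M) (Q N : ℕ) (hQN : Q ≤ N) (hN : 3 ≤ N)
    (x : ℝ) (hl : 50 ≤ Real.log x) (hlo : x ^ (1/200 : ℝ) ≤ N) (hhi : (N : ℝ) ≤ x ^ (1/100 : ℝ))
    (hx : 0 < x) :
    |∑ p ∈ N.primesLE.filter (fun p => Q < p), (1:ℝ)/p - Real.log (Real.log x)| ≤
      M + Real.log 200 + ∑ p ∈ Q.primesLE, (1:ℝ)/p := by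
  have hN0 : (0 : ℝ) < N := by exact_mod_cast (by omega : 0 < N)
  have l1 : Real.log x / 200 ≤ Real.log N := by
    have := Real.log_le_log (Real.rpow_pos_of_pos hx _) hlo
    rw [Real.log_rpow hx] at this
    linarith
  have l2 : Real.log N ≤ Real.log x := by
    have := Real.log_le_log hN0 hhi
    rw [Real.log_rpow hx] at this
    linarith
  have m1 : Real.log (Real.log x) - Real.log 200 ≤ Real.log (Real.log N) := by
    rw [← Real.log_div (by linarith) (by norm_num)]
    exact Real.log_le_log (by linarith) l1
  have m2 : Real.log (Real.log N) ≤ Real.log (Real.log x) :=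
    Real.log_le_log (by linarith) l2
  have hsplit := Finset.sum_filter_add_sum_filter_not N.primesLE (fun p => Q < p)
    (fun p => (1:ℝ)/p)
  have hQ : N.primesLE.filter (fun p => ¬ Q < p) = Q.primesLE := by
    ext p
    simp only [Finset.mem_filter, Nat.mem_primesLE, not_lt]
    constructor
    · rintro ⟨⟨_, h2⟩, h3⟩; exact ⟨h3, h2⟩
    · rintro ⟨h1, h2⟩; exact ⟨⟨h1.trans hQN, h2⟩, h1⟩
  rw [hQ] at hsplit
  have hr : 0 ≤ ∑ p ∈ Q.primesLE, (1:ℝ)/p := Finset.sum_nonneg (fun p _ => by positivity)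
  have h200 : 0 ≤ Real.log 200 := Real.log_nonneg (by norm_num)
  have := abs_le.1 (hM N hN)
  rw [abs_le]
  constructor <;> linarith [this.1, this.2]

lemma per_x (Q : ℕ) (hQ : 16 ≤ Q) (htail : ∀ N : ℕ, ∑ q ∈ Finset.Ioc Q N, tailF q ≤ 1 / 32)
    (x : ℝ) (a1 : (Q : ℝ) ≤ x ^ (1/4 : ℝ))
    (a2 : 2 * (Q : ℝ) ≤ x ^ (3/4 : ℝ)) (a3 : 100 ≤ x)
    (a4 : ∀ y : ℝ, x ^ (3/4 : ℝ) ≤ y → 0.6 * y ≤ Chebyshev.theta y)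
    (a5 : 8 * Real.sqrt x * Real.log x ≤ x ^ (3/4 : ℝ) / 16)
    (PQ : ℕ) (hPQ : PQ = ∏ p ∈ Q.primesLE, p) (b4 : (PQ : ℝ) ≤ x ^ (1/20 : ℝ))
    (N j : ℕ) (hQN : Q ≤ N) (hhi : (N : ℝ) ≤ x ^ (1/100 : ℝ))
    (𝒯 : Finset (Finset ℕ))
    (h𝒯 : ∀ T ∈ 𝒯, (∀ p ∈ T, p.Prime ∧ Q < p ∧ p ≤ N) ∧ T.card = j)
    (hlog : ∀ T ∈ 𝒯, ∑ p ∈ T, Real.log (p : ℕ) ≤ Real.log x / 5) :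
    x / (4 * Real.log x * PQ) * ∑ T ∈ 𝒯, ∏ p ∈ T, (1 : ℝ) / p ≤
      (((Finset.Icc 1 ⌊x⌋₊).filter
          (fun n => Squarefree (n * (n + 1)) ∧
            n.primeFactors.card = Q.primesLE.card + j + 1)).card : ℝ) := by
  have hx : 0 < x := by linarith
  have hPQ1 : 1 ≤ PQ := by
    rw [hPQ]
    exact Finset.prod_pos (fun p hp => (Nat.mem_primesLE.1 hp).2.pos)
  have hPQ0 : (0 : ℝ) < PQ := by exact_mod_cast hPQ1
  have hT1 : ∀ T ∈ 𝒯, 1 ≤ ∏ p ∈ T, p := fun T hT =>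
    Finset.prod_pos (fun p hp => ((h𝒯 T hT).1 p hp).1.pos)
  set G : Finset ℕ → Finset ℕ := fun T =>
    (((⌊x / ((PQ * ∏ p ∈ T, p : ℕ) : ℝ)⌋₊).primesLE.filter
      (fun p : ℕ => x / ((PQ * ∏ p ∈ T, p : ℕ) : ℝ) / Q < p)).filter
      (fun p => Squarefree ((PQ * ∏ p ∈ T, p) * p + 1))) with hGdef
  have hmx : ∀ T ∈ 𝒯, ((PQ * ∏ p ∈ T, p : ℕ) : ℝ) ≤ x ^ (1/4 : ℝ) := by
    intro T hT
    have h1 : ((∏ p ∈ T, p : ℕ) : ℝ) ≤ x ^ (1/5 : ℝ) := by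
      have hp : (0 : ℝ) < ((∏ p ∈ T, p : ℕ) : ℝ) := by exact_mod_cast hT1 T hT
      rw [← Real.log_le_log_iff hp (Real.rpow_pos_of_pos hx _), Real.log_rpow hx]
      push_cast
      rw [Real.log_prod (fun p hp => by
        exact_mod_cast ((h𝒯 T hT).1 p hp).1.ne_zero)]
      linarith [hlog T hT]
    have e : x ^ (1/4 : ℝ) = x ^ (1/20 : ℝ) * x ^ (1/5 : ℝ) := by
      rw [← Real.rpow_add hx]; norm_num
    rw [e, Nat.cast_mul]
    exact mul_le_mul b4 h1 (Nat.cast_nonneg _) (Real.rpow_nonneg hx.le _)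
  have hcnt := count_lower Q N j x hx.le 𝒯 h𝒯 hQN G (by
    intro T hT p hp
    rw [← hPQ]
    have hm1 : 1 ≤ PQ * ∏ p ∈ T, p := Nat.one_le_iff_ne_zero.2
      (Nat.mul_ne_zero (by omega) (by have := hT1 T hT; omega))
    have hm0 : (0 : ℝ) < ((PQ * ∏ p ∈ T, p : ℕ) : ℝ) := by exact_mod_cast hm1
    have hQ0 : (0 : ℝ) < Q := by exact_mod_cast (by omega : 0 < Q)
    simp only [hGdef, Finset.mem_filter, Nat.mem_primesLE] at hp
    obtain ⟨⟨⟨hp1, hp2⟩, hp3⟩, hp4⟩ := hp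
    refine ⟨hp2, ?_, ?_, hp4⟩
    · have h1 : x ^ (1/100 : ℝ) ≤ x / ((PQ * ∏ p ∈ T, p : ℕ) : ℝ) / Q := by
        rw [div_div, le_div_iff₀ (by positivity)]
        have hm := hmx T hT
        calc x ^ (1/100 : ℝ) * (((PQ * ∏ p ∈ T, p : ℕ) : ℝ) * Q)
            ≤ x ^ (1/2 : ℝ) * (x ^ (1/4 : ℝ) * x ^ (1/4 : ℝ)) := by
              have : x ^ (1/100 : ℝ) ≤ x ^ (1/2 : ℝ) :=
                Real.rpow_le_rpow_of_exponent_le (by linarith) (by norm_num)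
              gcongr
          _ = x := by
              rw [← Real.rpow_add hx, ← Real.rpow_add hx]; norm_num
      exact_mod_cast lt_of_le_of_lt (hhi.trans h1) hp3
    · have h1 : (p : ℝ) ≤ x / ((PQ * ∏ p ∈ T, p : ℕ) : ℝ) :=
        (Nat.le_floor_iff (by positivity)).1 hp1
      rw [le_div_iff₀ hm0] at h1
      rw [Nat.cast_mul, mul_comm]
      exact h1)
  have hcnt' : ∑ T ∈ 𝒯, ((G T).card : ℝ) ≤ (((Finset.Icc 1 ⌊x⌋₊).filter
          (fun n => Squarefree (n * (n + 1)) ∧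
            n.primeFactors.card = Q.primesLE.card + j + 1)).card : ℝ) := by
    exact_mod_cast hcnt
  refine le_trans ?_ hcnt'
  rw [Finset.mul_sum]
  refine Finset.sum_le_sum (fun T hT => ?_)
  have hm1 : 1 ≤ PQ * ∏ p ∈ T, p := Nat.one_le_iff_ne_zero.2
      (Nat.mul_ne_zero (by omega) (by have := hT1 T hT; omega))
  have hg := good_primes Q hQ htail x a1 a2 a3 a4 a5 (PQ * ∏ p ∈ T, p) hm1 (hmx T hT) (by
    intro q hq hqQ
    refine Dvd.dvd.mul_right ?_ _
    rw [hPQ]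
    exact Finset.dvd_prod_of_mem _ (Nat.mem_primesLE.2 ⟨hqQ, hq⟩))
  refine le_trans (le_of_eq ?_) hg
  have hpr : ∏ p ∈ T, (1 : ℝ) / p = 1 / ∏ p ∈ T, (p : ℝ) := by
    rw [Finset.prod_div_distrib]; simp
  rw [hpr]
  push_cast
  rw [div_mul_div_comm, div_div, mul_one]
  congr 1
  ring

/-- For each fixed `C > 0` there is `c_C > 0` such that for all large `x` and all
integers `k` with `|k - log log x| ≤ C √(log log x)`, the number of `n ≤ x` with
`n(n+1)` squarefree and `ω(n) = k` is at least `c_C x / √(log log x)`. -/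
theorem stmt7 (C : ℝ) (hC : 0 < C) :
    ∃ c : ℝ, 0 < c ∧ ∃ x₀ : ℝ, ∀ x : ℝ, x₀ ≤ x → ∀ k : ℕ,
      |(k : ℝ) - Real.log (Real.log x)| ≤ C * Real.sqrt (Real.log (Real.log x)) →
      c * x / Real.sqrt (Real.log (Real.log x)) ≤
        (((Finset.Icc 1 ⌊x⌋₊).filter
          (fun n => Squarefree (n * (n + 1)) ∧ n.primeFactors.card = k)).card : ℝ) := by
  obtain ⟨M, hM0, hM⟩ := mertens
  obtain ⟨Q, hQ, htail⟩ := exists_Q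
  obtain ⟨PQ, hPQ⟩ : ∃ PQ : ℕ, PQ = ∏ p ∈ Q.primesLE, p := ⟨_, rfl⟩
  obtain ⟨K, hK⟩ : ∃ K : ℝ, K = M + Real.log 200 + ∑ p ∈ Q.primesLE, (1:ℝ)/p := ⟨_, rfl⟩
  obtain ⟨r, hr⟩ : ∃ r : ℕ, r = Q.primesLE.card := ⟨_, rfl⟩
  have hK0 : 0 < K := by
    have h1 : 0 ≤ ∑ p ∈ Q.primesLE, (1:ℝ)/p := Finset.sum_nonneg (fun p _ => by positivity)
    have h200 : 0 ≤ Real.log 200 := Real.log_nonneg (by norm_num)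
    linarith
  have hPQ1 : 1 ≤ PQ := by
    rw [hPQ]
    exact Finset.prod_pos (fun p hp => (Nat.mem_primesLE.1 hp).2.pos)
  have hPQ0 : (0 : ℝ) < PQ := by exact_mod_cast hPQ1
  refine ⟨Real.exp (-K - (2 * (C + 1)) ^ 2) / (32 * Real.exp 1 * PQ), by positivity, ?_⟩
  rw [← Filter.eventually_atTop (p := fun x : ℝ => ∀ k : ℕ,
      |(k : ℝ) - Real.log (Real.log x)| ≤ C * Real.sqrt (Real.log (Real.log x)) →
      Real.exp (-K - (2 * (C + 1)) ^ 2) / (32 * Real.exp 1 * PQ) * x /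
        Real.sqrt (Real.log (Real.log x)) ≤
        (((Finset.Icc 1 ⌊x⌋₊).filter
          (fun n => Squarefree (n * (n + 1)) ∧ n.primeFactors.card = k)).card : ℝ))]
  filter_upwards [analytic_large Q, analytic_large2 Q PQ (C + r + 2 * K + 5)] with x hA hB k hk
  obtain ⟨a1, a2, a3, a4, a5⟩ := hA
  obtain ⟨b1, b2, b3, b4, b5⟩ := hB
  have hx : 0 < x := by linarith
  obtain ⟨N, hN⟩ : ∃ N : ℕ, N = ⌊x ^ (1/100 : ℝ)⌋₊ := ⟨_, rfl⟩
  have hhi : (N : ℝ) ≤ x ^ (1/100 : ℝ) := by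
    rw [hN]; exact Nat.floor_le (Real.rpow_nonneg hx.le _)
  have hlo' : x ^ (1/100 : ℝ) - 1 < N := by
    rw [hN]; exact Nat.sub_one_lt_floor _
  have hNQ : 3 + Q ≤ N := by
    have : ((3 + Q : ℕ) : ℝ) ≤ N := by push_cast; linarith
    exact_mod_cast this
  have hSb := sum_S_bound M hM Q N (by omega) (by omega) x b3 (by linarith) hhi hx
  rw [← hK] at hSb
  obtain ⟨P, hP⟩ : ∃ P : Finset ℕ, P = N.primesLE.filter (fun p => Q < p) := ⟨_, rfl⟩
  rw [← hP] at hSb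
  obtain ⟨S, hS⟩ : ∃ S : ℝ, S = ∑ p ∈ P, (1:ℝ)/p := ⟨_, rfl⟩
  rw [← hS] at hSb
  have hLLpos : 0 < Real.log (Real.log x) := Real.log_pos (by linarith)
  have hexpLL : Real.exp (Real.log (Real.log x)) = Real.log x := Real.exp_log (by linarith)
  have hss := Real.sq_sqrt hLLpos.le
  set LL := Real.log (Real.log x) with hLL
  set s := Real.sqrt LL with hs
  have hr0 : (0 : ℝ) ≤ r := Nat.cast_nonneg r
  have hs5 : 5 ≤ s := by linarith
  obtain ⟨hS1, hS2⟩ := abs_le.1 hSb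
  obtain ⟨hk1, hk2⟩ := abs_le.1 hk
  have hKs : K ≤ s / 2 := by linarith
  have hkr : r + 3 ≤ k := by
    have : ((r + 3 : ℕ) : ℝ) ≤ k := by
      push_cast
      have e1 : (C + r + 2 * K + 5) * s ≤ s ^ 2 := by
        rw [sq]; exact mul_le_mul_of_nonneg_right b5 (by linarith)
      have e2 : (r + 5) * 1 ≤ (r + 5) * s :=
        mul_le_mul_of_nonneg_left (by linarith) (by positivity)
      have e3 : 0 ≤ K * s := by positivity
      have e4 : (C + r + 2 * K + 5) * s = C * s + (r + 5) * s + 2 * (K * s) := by ring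
      linarith
    exact_mod_cast this
  obtain ⟨i, hi⟩ : ∃ i : ℕ, k = r + (i + 2) + 1 := ⟨k - r - 3, by omega⟩
  have hkc : (k : ℝ) = r + (i + 2) + 1 := by rw [hi]; push_cast; ring
  have hs2 : 5 * s ≤ s ^ 2 := by
    rw [sq]; exact mul_le_mul_of_nonneg_right hs5 (by linarith)
  have hSlo : s ^ 2 / 4 ≤ S := by linarith
  have hS0 : 0 < S := lt_of_lt_of_le (by positivity) hSlo
  have hsS : s ≤ 2 * Real.sqrt S := by
    have : s / 2 ≤ Real.sqrt S := by
      apply Real.le_sqrt_of_sq_le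
      rw [div_pow]
      linarith
    linarith
  have hjS : |((i + 2 : ℕ) : ℝ) - S| ≤ (C + 1) * s := by
    push_cast
    rw [abs_le]
    constructor <;> linarith
  have hjS' : |((i + 2 : ℕ) : ℝ) - S| ≤ 2 * (C + 1) * Real.sqrt S := by
    refine hjS.trans ?_
    calc (C + 1) * s ≤ (C + 1) * (2 * Real.sqrt S) := by gcongr
      _ = _ := by ring
  have hj2S : (i : ℝ) + 2 ≤ 2 * S := by
    have h1 := (abs_le.1 hjS).2
    push_cast at h1
    have h2 : (C + 1) * s ≤ S := by
      have e1 : (C + r + 2 * K + 5) * s ≤ s ^ 2 := by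
        rw [sq]; exact mul_le_mul_of_nonneg_right b5 (by linarith)
      have e2 : 0 ≤ (r + 2 * K) * s := by positivity
      have e3 : (C + r + 2 * K + 5) * s = (C + 1) * s + (r + 2 * K) * s + 4 * s := by ring
      linarith
    linarith
  have hsqj : Real.sqrt ((i + 2 : ℕ) : ℝ) ≤ 2 * s := by
    rw [Real.sqrt_le_left (by positivity)]
    push_cast
    rw [mul_pow]
    linarith
  have hL : 5 * (Real.log N + Real.log 4) ≤ Real.log x / 5 := by
    have hN0 : (0 : ℝ) < N := by exact_mod_cast (by omega : 0 < N)
    have := Real.log_le_log hN0 hhi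
    rw [Real.log_rpow hx] at this
    have h4 : Real.log 4 < 1.4 := by
      have : (4 : ℝ) = 2 ^ 2 := by norm_num
      rw [this, Real.log_pow]
      have := Real.log_two_lt_d9
      push_cast
      linarith
    linarith
  have htr := truncated_sum_lower Q N i hQ (by omega) P hP S _ hS hS0 hL hj2S
  have hst := pow_div_factorial_lower S (2 * (C + 1)) hS0 (i + 2) (by omega) hjS'
  have hmain := per_x Q hQ htail x a1 a2 a3 a4 a5 PQ hPQ b4 N (i + 2) (by omega) hhi
    ((P.powersetCard (i + 2)).filter (fun T => ∑ p ∈ T, Real.log (p : ℕ) ≤ Real.log x / 5))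
    (by
      intro T hT
      rw [Finset.mem_filter, Finset.mem_powersetCard] at hT
      refine ⟨fun p hp => ?_, hT.1.2⟩
      have := hT.1.1 hp
      rw [hP, Finset.mem_filter, Nat.mem_primesLE] at this
      exact ⟨this.1.2, this.2, this.1.1⟩)
    (fun T hT => (Finset.mem_filter.1 hT).2)
  rw [← hr, ← hi] at hmain
  refine le_trans ?_ hmain
  have hl0 : 0 < Real.log x := by linarith
  have hs0 : 0 < s := by linarith
  have hkey : Real.log x * Real.exp (-K - (2 * (C + 1)) ^ 2) / (Real.exp 1 * (2 * s)) / 4 ≤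
      ∑ T ∈ (P.powersetCard (i + 2)).filter
        (fun T => ∑ p ∈ T, Real.log (p : ℕ) ≤ Real.log x / 5), ∏ p ∈ T, (1 : ℝ) / p := by
    refine le_trans ?_ htr
    refine div_le_div_of_nonneg_right (le_trans ?_ hst) (by norm_num)
    have hj0 : 0 < Real.sqrt ((i + 2 : ℕ) : ℝ) := Real.sqrt_pos.2 (by positivity)
    have h1 : Real.log x * Real.exp (-K - (2 * (C + 1)) ^ 2) ≤
        Real.exp (S - (2 * (C + 1)) ^ 2) := by
      rw [← hexpLL, ← Real.exp_add]
      apply Real.exp_le_exp.2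
      linarith
    gcongr
  calc _ = x / (4 * Real.log x * PQ) *
        (Real.log x * Real.exp (-K - (2 * (C + 1)) ^ 2) / (Real.exp 1 * (2 * s)) / 4) := by
          field_simp
          norm_num
    _ ≤ _ := by gcongr
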